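/- arXiv:2104.11306 — 2 statements merged into one kernel-verified Lean document; each statement's English description precedes it below -/
import Mathlib

section
/- Let A be a constant rank first-order operator and let u ∈ L^p(Ω;ℝ^N) be the high-contrast limit of a family {u_ε} ⊂ L^p(Ω;ℝ^N): explicitly, εu_ε ⇀ 0 weakly in L^p(Ω;ℝ^N) and there is {ũ_ε} ⊂ L^p(Ω;ℝ^N) with A ũ_ε = 0 in W^{−1,p}(Ω;ℝ^M), ũ_ε ⇀ u weakly in L^p(Ω;ℝ^N), and u_ε = ũ_ε in Ω_{1,ε}. Suppose sup_ε F_ε(u_ε) ≤ c for some c ≥ −aλℒ^d(Ω) and set v_ε = u_ε − ũ_ε. Then: A u = 0 in W^{−1,p}(Ω;ℝ^M); v_ε = 0 in Ω_{1,ε}; A v_ε = 0 in W^{−1,p}(Ω;ℝ^M); εv_ε ⇀ 0 weakly in L^p(Ω;ℝ^N); liminf_{ε→0} F_{0,ε}(v_ε) + liminf_{ε→0} F_{1,ε}(ũ_ε) ≤ liminf_{ε→0} F_ε(u_ε); and limsup_{ε→0} F_ε(u_ε) ≤ limsup_{ε→0} F_{0,ε}(v_ε) + limsup_{ε→0} F_{1,ε}(ũ_ε).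 -/
open MeasureTheory Filter Topology Metric Set
open scoped ENNReal NNReal

noncomputable section

attribute [local instance] Classical.propDecidable

namespace HC

abbrev Rd (d : ℕ) := Fin d → ℝ
abbrev Vec (N : ℕ) := Fin N → ℝ

/-- Euclidean inner product on `ℝ^N`. -/
def dot {N : ℕ} (u v : Vec N) : ℝ := ∑ j, u j * v j

/-- Euclidean norm on `ℝ^N`. -/
def eN {N : ℕ} (ξ : Vec N) : ℝ := Real.sqrt (∑ j, ξ j ^ 2)

/-- The open unit cube `Q = (0,1)^d`. -/
def Qcube (d : ℕ) : Set (Rd d) := {x | ∀ i, x i ∈ Set.Ioo (0 : ℝ) 1}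

/-- Translation by an integer vector. -/
def tr {d : ℕ} (z : Fin d → ℤ) (x : Rd d) : Rd d := fun i => x i + (z i : ℝ)

/-- The cell `ε (S + z)`. -/
def cell {d : ℕ} (ε : ℝ) (z : Fin d → ℤ) (S : Set (Rd d)) : Set (Rd d) :=
  (fun y : Rd d => fun i => ε * (y i + (z i : ℝ))) '' S

/-- The union of the soft inclusions `Ω_{0,ε}`. -/
def softPart {d : ℕ} (ε : ℝ) (Ω D0 : Set (Rd d)) : Set (Rd d) :=
  ⋃ z ∈ {z : Fin d → ℤ | cell ε z D0 ⊆ Ω}, cell ε z D0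

/-- The stiff matrix `Ω_{1,ε}`. -/
def stiffPart {d : ℕ} (ε : ℝ) (Ω D0 : Set (Rd d)) : Set (Rd d) := Ω \ softPart ε Ω D0

/-- `Ω̂_ε`, the union of the ε-cubes contained in `Ω`. -/
def hatOmega {d : ℕ} (ε : ℝ) (Ω : Set (Rd d)) : Set (Rd d) :=
  ⋃ z ∈ {z : Fin d → ℤ | cell ε z (Qcube d) ⊆ Ω}, cell ε z (Qcube d)

/-- `Q`-periodicity of a map defined on `ℝ^d`. -/
def Zper {d : ℕ} {α : Type*} (u : Rd d → α) : Prop :=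
  ∀ (x : Rd d) (z : Fin d → ℤ), u (tr z x) = u x

/-- A local Lipschitz-graph description of `Ω` near the point `x`:  after an orthogonal
change of coordinates, `Ω` is locally the epigraph of a Lipschitz function. -/
def LipschitzGraphAt {d : ℕ} (Ω : Set (Rd d)) (x : Rd d) : Prop :=
  ∃ (L : Rd d ≃ₗ[ℝ] Rd d) (i : Fin d) (φ : Rd d → ℝ) (K : ℝ≥0) (r : ℝ),
    0 < r ∧ (∀ y z : Rd d, dot (L y) (L z) = dot y z) ∧ LipschitzWith K φ ∧
    (∀ y t, φ (Function.update y i t) = φ y) ∧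
    (∀ y ∈ Metric.ball x r, (y ∈ Ω ↔ φ (L y) < L y i))

/-- `Ω` has Lipschitz boundary. -/
def HasLipschitzBoundary {d : ℕ} (Ω : Set (Rd d)) : Prop :=
  ∀ x ∈ frontier Ω, LipschitzGraphAt Ω x

/-- Compact containment `Ω' ⋐ Ω`. -/
def CpctIn {d : ℕ} (Ω' Ω : Set (Rd d)) : Prop :=
  IsOpen Ω' ∧ IsCompact (closure Ω') ∧ closure Ω' ⊆ Ω

/-- The standing geometric assumptions: `d ≥ 2`, `Ω` bounded connected open Lipschitz,
`D₀ ⋐ Q` open connected Lipschitz. -/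
def GoodSetting (d : ℕ) (Ω D0 : Set (Rd d)) : Prop :=
  2 ≤ d ∧ IsOpen Ω ∧ IsConnected Ω ∧ Bornology.IsBounded Ω ∧ HasLipschitzBoundary Ω ∧
    IsOpen D0 ∧ IsConnected D0 ∧ HasLipschitzBoundary D0 ∧
    IsCompact (closure D0) ∧ closure D0 ⊆ Qcube d

/-! ## First-order constant-coefficient operators -/

/-- The pointwise value of the formal adjoint:
`(𝒜*ψ)(x) = - ∑ i (A^{(i)})^T ∂ψ/∂x_i (x)`. -/
def adjApply {d N M : ℕ} (A : Fin d → (Vec N →ₗ[ℝ] Vec M)) (ψ : Rd d → Vec M)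
    (x : Rd d) : Vec N :=
  fun n => -∑ i, dot (A i (Pi.single n 1)) (fderiv ℝ ψ x (Pi.single i 1))

/-- Smooth test functions compactly supported in `O`. -/
def TestOn {d M : ℕ} (O : Set (Rd d)) (ψ : Rd d → Vec M) : Prop :=
  ContDiff ℝ (⊤ : ℕ∞) ψ ∧ HasCompactSupport ψ ∧ tsupport ψ ⊆ O

/-- `𝒜 u = 0` in `W^{-1,p}(O)`, i.e. distributionally on `O`. -/
def AFreeOn {d N M : ℕ} (A : Fin d → (Vec N →ₗ[ℝ] Vec M)) (O : Set (Rd d))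
    (u : Rd d → Vec N) : Prop :=
  ∀ ψ : Rd d → Vec M, TestOn O ψ → ∫ x in O, dot (u x) (adjApply A ψ x) = 0

/-- `𝒜 u = 0` on the torus `𝕋^d` (with `Q`-periodic test functions). -/
def AFreeTorus {d N M : ℕ} (A : Fin d → (Vec N →ₗ[ℝ] Vec M)) (u : Rd d → Vec N) : Prop :=
  ∀ ψ : Rd d → Vec M, ContDiff ℝ (⊤ : ℕ∞) ψ → Zper ψ →
    ∫ x in Qcube d, dot (u x) (adjApply A ψ x) = 0

/-- The symbol `𝔸[ω] = ∑ i ω_i A^{(i)}`. -/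
def symb {d N M : ℕ} (A : Fin d → (Vec N →ₗ[ℝ] Vec M)) (ω : Rd d) : Vec N →ₗ[ℝ] Vec M :=
  ∑ i, ω i • A i

/-- Murat's constant rank condition. -/
def ConstantRank {d N M : ℕ} (A : Fin d → (Vec N →ₗ[ℝ] Vec M)) : Prop :=
  ∃ r : ℕ, ∀ ω : Rd d, ω ≠ 0 → Module.finrank ℝ (LinearMap.range (symb A ω)) = r

/-! ## Lp spaces and convergences -/

def MemLpOn {d N : ℕ} (p : ℝ) (O : Set (Rd d)) (u : Rd d → Vec N) : Prop :=
  MemLp u (ENNReal.ofReal p) (volume.restrict O)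

def LpNormOn {d N : ℕ} (p : ℝ) (O : Set (Rd d)) (u : Rd d → Vec N) : ℝ :=
  (eLpNorm (fun x => eN (u x)) (ENNReal.ofReal p) (volume.restrict O)).toReal

/-- The conjugate exponent `p' = p/(p-1)`. -/
def conjExp (p : ℝ) : ℝ := p / (p - 1)

/-- Weak convergence in `L^p(O; ℝ^N)` of a family along a filter. -/
def WeakLpTendsto {d N : ℕ} (p : ℝ) (O : Set (Rd d)) {ι : Type*} (l : Filter ι)
    (u : ι → Rd d → Vec N) (v : Rd d → Vec N) : Prop :=
  ∀ g : Rd d → Vec N, MemLpOn (conjExp p) O g →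
    Tendsto (fun k => ∫ x in O, dot (u k x) (g x)) l (𝓝 (∫ x in O, dot (v x) (g x)))

/-- `p`-equiintegrability of a family in `L^p(O)`. -/
def PEquiintegrable {d N : ℕ} (p : ℝ) (O : Set (Rd d)) {ι : Type*}
    (u : ι → Rd d → Vec N) : Prop :=
  ∀ η : ℝ, 0 < η → ∃ m : ℝ, 0 < m ∧ ∀ (k : ι) (E : Set (Rd d)), MeasurableSet E → E ⊆ O →
    volume E < ENNReal.ofReal m → ∫ x in E, eN (u k x) ^ p < η

/-- Membership in `L^p(Ω × Q; ℝ^N)`. -/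
def MemLpProd {d N : ℕ} (p : ℝ) (Ω : Set (Rd d)) (v : Rd d → Rd d → Vec N) : Prop :=
  MemLp (fun q : Rd d × Rd d => v q.1 q.2) (ENNReal.ofReal p)
    ((volume.restrict Ω).prod (volume.restrict (Qcube d)))

def LpNormProd {d N : ℕ} (p : ℝ) (Ω : Set (Rd d)) (v : Rd d → Rd d → Vec N) : ℝ :=
  (eLpNorm (fun q : Rd d × Rd d => eN (v q.1 q.2)) (ENNReal.ofReal p)
    ((volume.restrict Ω).prod (volume.restrict (Qcube d)))).toReal

/-- `p`-equiintegrability of a family in `L^p(Ω × Q)`. -/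
def PEquiintegrableProd {d N : ℕ} (p : ℝ) (Ω : Set (Rd d)) {ι : Type*}
    (w : ι → Rd d → Rd d → Vec N) : Prop :=
  ∀ η : ℝ, 0 < η → ∃ m : ℝ, 0 < m ∧ ∀ (k : ι) (E : Set (Rd d × Rd d)), MeasurableSet E →
    ((volume.restrict Ω).prod (volume.restrict (Qcube d))) E < ENNReal.ofReal m →
    ∫ q in E, eN (w k q.1 q.2) ^ p
        ∂((volume.restrict Ω).prod (volume.restrict (Qcube d))) < η

/-! ## Two-scale convergence and unfolding -/

/-- `x ↦ sup_{y ∈ Q̄} |g(x,y)|`. -/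
def perSup {d N : ℕ} (g : Rd d → Rd d → Vec N) (x : Rd d) : ℝ :=
  sSup ((fun y => eN (g x y)) '' closure (Qcube d))

/-- Test functions for two-scale convergence: elements of `L^{p'}(Ω; C_per(ℝ^d;ℝ^N))`. -/
def TwoScaleTest {d N : ℕ} (p : ℝ) (Ω : Set (Rd d)) (g : Rd d → Rd d → Vec N) : Prop :=
  (∀ x, Continuous (g x)) ∧ (∀ x, Zper (g x)) ∧
    MemLp (perSup g) (ENNReal.ofReal (conjExp p)) (volume.restrict Ω)

/-- Weak two-scale convergence in `L^p`, along a filter `l` with scales `η`. -/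
def WeakTwoScale {d N : ℕ} (p : ℝ) (Ω : Set (Rd d)) {ι : Type*} (l : Filter ι) (η : ι → ℝ)
    (u : ι → Rd d → Vec N) (v : Rd d → Rd d → Vec N) : Prop :=
  ∀ g : Rd d → Rd d → Vec N, TwoScaleTest p Ω g →
    Tendsto (fun k => ∫ x in Ω, dot (u k x) (g x ((η k)⁻¹ • x))) l
      (𝓝 (∫ x in Ω, ∫ y in Qcube d, dot (v x y) (g x y)))

/-- Strong two-scale convergence in `L^p`. -/
def StrongTwoScale {d N : ℕ} (p : ℝ) (Ω : Set (Rd d)) {ι : Type*} (l : Filter ι) (η : ι → ℝ)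
    (u : ι → Rd d → Vec N) (v : Rd d → Rd d → Vec N) : Prop :=
  WeakTwoScale p Ω l η u v ∧ Tendsto (fun k => LpNormOn p Ω (u k)) l (𝓝 (LpNormProd p Ω v))

/-- The unfolding operator `S_ε v (x,y) = ṽ(ε⌊x/ε⌋ + εy)`, where `ṽ` is the extension of `v`
by `0` outside `Ω`. -/
def unfold {d N : ℕ} (ε : ℝ) (Ω : Set (Rd d)) (v : Rd d → Vec N) :
    Rd d → Rd d → Vec N :=
  fun x y => Set.indicator Ω v (fun i => ε * ((⌊x i / ε⌋ : ℝ) + y i))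

/-! ## The energy densities and their hypotheses -/

def H1soft {N : ℕ} (f0 : ℝ → Vec N → ℝ) : Prop := ∀ ε : ℝ, 0 < ε → Continuous (f0 ε)

def H1stiff {d N : ℕ} (f1 : Rd d → Vec N → ℝ) : Prop :=
  (∀ ξ, Measurable fun x => f1 x ξ) ∧ ∀ x, Continuous (f1 x)

def H2 {d N : ℕ} (f1 : Rd d → Vec N → ℝ) : Prop :=
  ∀ (x : Rd d) (z : Fin d → ℤ) (ξ : Vec N), f1 (tr z x) ξ = f1 x ξ

def H3soft {N : ℕ} (p a lam Lam : ℝ) (f0 : ℝ → Vec N → ℝ) : Prop :=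
  0 < a ∧ 0 < lam ∧ 0 < Lam ∧
    ∀ ε : ℝ, 0 < ε → ∀ ξ, lam * (-a + eN ξ ^ p) ≤ f0 ε ξ ∧ f0 ε ξ ≤ Lam * (1 + eN ξ ^ p)

def H3stiff {d N : ℕ} (p a lam Lam : ℝ) (f1 : Rd d → Vec N → ℝ) : Prop :=
  0 < a ∧ 0 < lam ∧ 0 < Lam ∧
    ∀ (x : Rd d) (ξ : Vec N), lam * (-a + eN ξ ^ p) ≤ f1 x ξ ∧ f1 x ξ ≤ Lam * (1 + eN ξ ^ p)

def H4soft {N : ℕ} (p mu : ℝ) (f0 : ℝ → Vec N → ℝ) : Prop :=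
  0 < mu ∧ ∀ ε : ℝ, 0 < ε → ∀ ξ ζ : Vec N,
    |f0 ε ξ - f0 ε ζ| ≤ mu * (1 + eN ξ ^ (p - 1) + eN ζ ^ (p - 1)) * eN (ξ - ζ)

def H4stiff {d N : ℕ} (p mu : ℝ) (f1 : Rd d → Vec N → ℝ) : Prop :=
  0 < mu ∧ ∀ (x : Rd d) (ξ ζ : Vec N),
    |f1 x ξ - f1 x ζ| ≤ mu * (1 + eN ξ ^ (p - 1) + eN ζ ^ (p - 1)) * eN (ξ - ζ)

def H5 {N : ℕ} (f0 : ℝ → Vec N → ℝ) (f0lim : Vec N → ℝ) : Prop :=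
  ∀ ξ, Tendsto (fun ε => f0 ε ξ) (𝓝[>] (0 : ℝ)) (𝓝 (f0lim ξ))

/-! ## The admissible class: Assumptions 1 and 2 -/

/-- Assumption 1 (null average). -/
def NullAverage {d N M : ℕ} (p : ℝ) (A : Fin d → (Vec N →ₗ[ℝ] Vec M))
    (D0 : Set (Rd d)) : Prop :=
  ∀ u : Rd d → Vec N, MemLp u (ENNReal.ofReal p) (volume.restrict (Qcube d)) → Zper u →
    (∀ᵐ y ∂volume.restrict (Qcube d \ D0), u y = 0) → AFreeTorus A u →
    (∫ y in Qcube d, u y) = 0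

/-- Assumption 2 (`𝒜`-free extension operators on the perforated domains). -/
def ExtensionProperty {d N M : ℕ} (p : ℝ) (A : Fin d → (Vec N →ₗ[ℝ] Vec M))
    (Ω D0 : Set (Rd d)) (c : ℝ) (E : ℝ → (Rd d → Vec N) → (Rd d → Vec N)) : Prop :=
  0 < c ∧
  (∀ ε : ℝ, 0 < ε → ∀ u : Rd d → Vec N, MemLpOn p Ω u → AFreeOn A Ω u →
    (∀ᵐ x ∂volume.restrict (stiffPart ε Ω D0), E ε u x = u x) ∧
    MemLpOn p Ω (E ε u) ∧
    LpNormOn p Ω (E ε u) ≤ c * LpNormOn p (stiffPart ε Ω D0) u ∧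
    AFreeOn A Ω (E ε u)) ∧
  (∀ u : ℝ → Rd d → Vec N, (∀ ε : ℝ, 0 < ε → MemLpOn p Ω (u ε) ∧ AFreeOn A Ω (u ε)) →
    PEquiintegrable p Ω (fun ε : {ε : ℝ // 0 < ε} => u ε.1) →
    PEquiintegrable p Ω (fun ε : {ε : ℝ // 0 < ε} => E ε.1 (u ε.1)))

/-- An admissible operator: constant rank together with Assumptions 1 and 2. -/
def Admissible {d N M : ℕ} (p : ℝ) (A : Fin d → (Vec N →ₗ[ℝ] Vec M))
    (Ω D0 : Set (Rd d)) : Prop :=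
  ConstantRank A ∧ NullAverage p A D0 ∧ ∃ c E, ExtensionProperty p A Ω D0 c E

/-! ## High-contrast convergence -/

/-- High-contrast convergence of a family `u` (with scales `η`) to `v`. -/
def HCTendsto {d N M : ℕ} (p : ℝ) (A : Fin d → (Vec N →ₗ[ℝ] Vec M)) (Ω D0 : Set (Rd d))
    {ι : Type*} (l : Filter ι) (η : ι → ℝ) (u : ι → Rd d → Vec N) (v : Rd d → Vec N) : Prop :=
  WeakLpTendsto p Ω l (fun k x => η k • u k x) 0 ∧
  ∃ ut : ι → Rd d → Vec N,
    (∀ k, MemLpOn p Ω (ut k) ∧ AFreeOn A Ω (ut k)) ∧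
    (∀ k, ∀ᵐ x ∂volume.restrict (stiffPart (η k) Ω D0), u k x = ut k x) ∧
    WeakLpTendsto p Ω l ut v

/-! ## The functionals -/

def U1 {d N M : ℕ} (p : ℝ) (A : Fin d → (Vec N →ₗ[ℝ] Vec M)) (Ω : Set (Rd d)) :
    Set (Rd d → Vec N) :=
  {u | MemLpOn p Ω u ∧ AFreeOn A Ω u}

def U0 {d N M : ℕ} (p : ℝ) (A : Fin d → (Vec N →ₗ[ℝ] Vec M)) (Ω D0 Ω' : Set (Rd d)) :
    Set (Rd d → Rd d → Vec N) :=
  {u | MemLpProd p Ω u ∧ (∀ x, Zper (u x)) ∧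
    (∀ x, ∀ᵐ y ∂volume.restrict (Qcube d \ D0), u x y = 0) ∧
    (∀ᵐ x ∂volume.restrict Ω', AFreeTorus A (u x))}

/-- The constant `α₀`. -/
def alpha0 {d N M : ℕ} (p : ℝ) (A : Fin d → (Vec N →ₗ[ℝ] Vec M)) (Ω D0 : Set (Rd d))
    (f0lim : Vec N → ℝ) : ℝ :=
  sSup {c : ℝ | ∃ Ω' : Set (Rd d), CpctIn Ω' Ω ∧
    c = sInf {e : ℝ | ∃ u ∈ U0 p A Ω D0 Ω', e = ∫ x in Ω', ∫ y in D0, f0lim (u x y)}}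

/-- The `ℤ^d`-periodization of `D₁ = Q ∖ D₀`. -/
def D1per {d : ℕ} (D0 : Set (Rd d)) : Set (Rd d) :=
  ⋃ z : Fin d → ℤ, tr z '' (Qcube d \ D0)

/-- The homogenized stiff energy density `f_hom`. -/
def fhom {d N M : ℕ} (p : ℝ) (A : Fin d → (Vec N →ₗ[ℝ] Vec M)) (D0 : Set (Rd d))
    (f1 : Rd d → Vec N → ℝ) (ξ : Vec N) : ℝ :=
  liminf (fun k : ℕ =>
    sInf {c : ℝ | ∃ v : Rd d → Vec N,
      MemLp v (ENNReal.ofReal p) (volume.restrict (Qcube d)) ∧ Zper v ∧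
      (∫ y in Qcube d, v y) = 0 ∧ AFreeTorus A v ∧
      c = ∫ y in Qcube d ∩ {y | (k : ℝ) • y ∈ D1per D0}, f1 ((k : ℝ) • y) (ξ + v y)}) atTop

/-- The high-contrast energy `F_ε`. -/
def Feps {d N M : ℕ} (p : ℝ) (A : Fin d → (Vec N →ₗ[ℝ] Vec M)) (Ω D0 : Set (Rd d))
    (f0 : ℝ → Vec N → ℝ) (f1 : Rd d → Vec N → ℝ) (ε : ℝ) (u : Rd d → Vec N) : EReal :=
  if u ∈ U1 p A Ω then
    (((∫ x in softPart ε Ω D0, f0 ε (ε • u x)) +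
      ∫ x in stiffPart ε Ω D0, f1 (ε⁻¹ • x) (u x) : ℝ) : EReal)
  else ⊤

/-- The soft energy `F_{0,ε}`. -/
def F0eps {d N M : ℕ} (p : ℝ) (A : Fin d → (Vec N →ₗ[ℝ] Vec M)) (Ω D0 : Set (Rd d))
    (f0 : ℝ → Vec N → ℝ) (ε : ℝ) (u : Rd d → Vec N) : EReal :=
  if u ∈ U1 p A Ω then ((∫ x in softPart ε Ω D0, f0 ε (ε • u x) : ℝ) : EReal) else ⊤

/-- The stiff energy `F_{1,ε}`. -/
def F1eps {d N M : ℕ} (p : ℝ) (A : Fin d → (Vec N →ₗ[ℝ] Vec M)) (Ω D0 : Set (Rd d))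
    (f1 : Rd d → Vec N → ℝ) (ε : ℝ) (u : Rd d → Vec N) : EReal :=
  if u ∈ U1 p A Ω then ((∫ x in stiffPart ε Ω D0, f1 (ε⁻¹ • x) (u x) : ℝ) : EReal) else ⊤

/-- The limiting functional `F = α₀ + ∫_Ω f_hom(u)`. -/
def Flim {d N M : ℕ} (p : ℝ) (A : Fin d → (Vec N →ₗ[ℝ] Vec M)) (Ω D0 : Set (Rd d))
    (f0lim : Vec N → ℝ) (f1 : Rd d → Vec N → ℝ) (u : Rd d → Vec N) : EReal :=
  if u ∈ U1 p A Ω then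
    ((alpha0 p A Ω D0 f0lim + ∫ x in Ω, fhom p A D0 f1 (u x) : ℝ) : EReal)
  else ⊤

/-- The limiting soft functional `F₀`. -/
def F0lim {d N M : ℕ} (p : ℝ) (A : Fin d → (Vec N →ₗ[ℝ] Vec M)) (Ω D0 : Set (Rd d))
    (f0lim : Vec N → ℝ) (u : Rd d → Vec N) : EReal :=
  if u =ᵐ[volume.restrict Ω] (0 : Rd d → Vec N) then ((alpha0 p A Ω D0 f0lim : ℝ) : EReal)
  else ⊤

/-- The limiting stiff functional `F₁`. -/
def F1lim {d N M : ℕ} (p : ℝ) (A : Fin d → (Vec N →ₗ[ℝ] Vec M)) (Ω D0 : Set (Rd d))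
    (f1 : Rd d → Vec N → ℝ) (u : Rd d → Vec N) : EReal :=
  if u ∈ U1 p A Ω then ((∫ x in Ω, fhom p A D0 f1 (u x) : ℝ) : EReal) else ⊤

/-! ## Higher-order operators, potentials, Sobolev spaces -/

/-- The pointwise value of the formal adjoint of the `k`-th order homogeneous operator
with coefficients `A`. -/
def adjOp {d k N M : ℕ} (A : (Fin k → Fin d) → (Vec N →ₗ[ℝ] Vec M)) (ψ : Rd d → Vec M)
    (x : Rd d) : Vec N :=
  fun n => (-1 : ℝ) ^ k * ∑ j : Fin k → Fin d,
    dot (A j (Pi.single n 1)) (iteratedFDeriv ℝ k ψ x (fun t => Pi.single (j t) 1))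

/-- `𝒜 u = 0` in `W^{-k,p}(O)` for a `k`-th order operator. -/
def AFreeOnK {d k N M : ℕ} (A : (Fin k → Fin d) → (Vec N →ₗ[ℝ] Vec M)) (O : Set (Rd d))
    (u : Rd d → Vec N) : Prop :=
  ∀ ψ : Rd d → Vec M, TestOn O ψ → ∫ x in O, dot (u x) (adjOp A ψ x) = 0

/-- The symbol of a `k`-th order homogeneous operator. -/
def symbK {d k N M : ℕ} (A : (Fin k → Fin d) → (Vec N →ₗ[ℝ] Vec M)) (ω : Rd d) :
    Vec N →ₗ[ℝ] Vec M :=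
  ∑ j : Fin k → Fin d, (∏ t, ω (j t)) • A j

def ConstantRankK {d k N M : ℕ} (A : (Fin k → Fin d) → (Vec N →ₗ[ℝ] Vec M)) : Prop :=
  ∃ r : ℕ, ∀ ω : Rd d, ω ≠ 0 → Module.finrank ℝ (LinearMap.range (symbK A ω)) = r

/-- `g` is the weak partial derivative `∂_j w` (for the `m`-tuple `j` of directions) on `U`. -/
def IsWeakDerivOn {d m M : ℕ} (U : Set (Rd d)) (j : Fin m → Fin d) (w g : Rd d → Vec M) :
    Prop :=
  ∀ φ : Rd d → ℝ, ContDiff ℝ (⊤ : ℕ∞) φ → HasCompactSupport φ → tsupport φ ⊆ U →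
    ∀ cc : Fin M, (∫ x in U, w x cc * iteratedFDeriv ℝ m φ x (fun t => Pi.single (j t) 1))
      = (-1 : ℝ) ^ m * ∫ x in U, g x cc * φ x

/-- Membership in the Sobolev space `W^{ℓ,p}(U; ℝ^M)`. -/
def MemW {d M : ℕ} (ℓ : ℕ) (p : ℝ) (U : Set (Rd d)) (w : Rd d → Vec M) : Prop :=
  MemLpOn p U w ∧ ∀ m : ℕ, m ≤ ℓ → ∀ j : Fin m → Fin d,
    ∃ g : Rd d → Vec M, MemLpOn p U g ∧ IsWeakDerivOn U j w g

/-- A choice of the weak derivative `∂_j w` on `U` (defaults to `0`). -/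
def wDeriv {d m M : ℕ} (p : ℝ) (U : Set (Rd d)) (j : Fin m → Fin d) (w : Rd d → Vec M) :
    Rd d → Vec M :=
  if h : ∃ g : Rd d → Vec M, MemLpOn p U g ∧ IsWeakDerivOn U j w g then h.choose else 0

/-- The `L^p(U)` norm of the `ℓ`-th order (weak) gradient `∇^ℓ w`. -/
def gradLp {d M : ℕ} (ℓ : ℕ) (p : ℝ) (U : Set (Rd d)) (w : Rd d → Vec M) : ℝ :=
  (eLpNorm (fun x => Real.sqrt (∑ j : Fin ℓ → Fin d, eN (wDeriv p U j w x) ^ 2))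
    (ENNReal.ofReal p) (volume.restrict U)).toReal

/-- The action `ℬ w = ∑_{|j|=ℓ} B^{(j)} ∂_j w` of an `ℓ`-th order operator on a Sobolev
function, through its weak derivatives. -/
def opApplyW {d ℓ M N : ℕ} (p : ℝ) (U : Set (Rd d))
    (B : (Fin ℓ → Fin d) → (Vec M →ₗ[ℝ] Vec N)) (w : Rd d → Vec M) : Rd d → Vec N :=
  fun x => ∑ j : Fin ℓ → Fin d, B j (wDeriv p U j w x)

/-- `U` is an `𝒜`-extension domain (for a `k`-th order operator `𝒜`). -/
def AExtensionDomainK {d k N M : ℕ} (p : ℝ) (A : (Fin k → Fin d) → (Vec N →ₗ[ℝ] Vec M))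
    (U : Set (Rd d)) : Prop :=
  ∃ (E : (Rd d → Vec N) → (Rd d → Vec N)) (c : ℝ), 0 < c ∧
    ∀ u : Rd d → Vec N, MemLpOn p U u → AFreeOnK A U u →
      (∀ᵐ x ∂volume.restrict U, E u x = u x) ∧
      MemLp (E u) (ENNReal.ofReal p) volume ∧
      LpNormOn p Set.univ (E u) ≤ c * LpNormOn p U u ∧
      AFreeOnK A Set.univ (E u)

/-- `U` is an `𝒜`-extension domain (first-order version). -/
def AExtensionDomain1 {d N M : ℕ} (p : ℝ) (A : Fin d → (Vec N →ₗ[ℝ] Vec M))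
    (U : Set (Rd d)) : Prop :=
  ∃ (E : (Rd d → Vec N) → (Rd d → Vec N)) (c : ℝ), 0 < c ∧
    ∀ u : Rd d → Vec N, MemLpOn p U u → AFreeOn A U u →
      (∀ᵐ x ∂volume.restrict U, E u x = u x) ∧
      MemLp (E u) (ENNReal.ofReal p) volume ∧
      LpNormOn p Set.univ (E u) ≤ c * LpNormOn p U u ∧
      AFreeOn A Set.univ (E u)

/-- The `W^{m,q}(ℝ^d)` norm of a smooth function. -/
def WmNorm {d M : ℕ} (m : ℕ) (q : ℝ) (ψ : Rd d → Vec M) : ℝ :=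
  ∑ j ∈ Finset.range (m + 1),
    (eLpNorm (fun x => ‖iteratedFDeriv ℝ j ψ x‖) (ENNReal.ofReal q) volume).toReal

/-- The `W^{-m,p}(ℝ^d)` norm of `𝒜 u`, via duality with `W^{m,p'}`. -/
def negNorm {d k N M : ℕ} (m : ℕ) (p : ℝ) (A : (Fin k → Fin d) → (Vec N →ₗ[ℝ] Vec M))
    (u : Rd d → Vec N) : ℝ :=
  sSup {c : ℝ | ∃ ψ : Rd d → Vec M, ContDiff ℝ (⊤ : ℕ∞) ψ ∧ HasCompactSupport ψ ∧
    WmNorm m (conjExp p) ψ ≤ 1 ∧ c = ∫ x, dot (u x) (adjOp A ψ x)}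

/-! ## Fourier-analytic material -/

/-- Fourier transform of a (complexified, vector-valued) function. -/
def ftC {d N : ℕ} (f : Rd d → (Fin N → ℂ)) (ω : Rd d) : Fin N → ℂ :=
  ∫ x : Rd d, Complex.exp (-(2 * Real.pi * Complex.I) * (∑ i, (x i : ℂ) * (ω i : ℂ))) • f x

/-- Complexification of a real vector-valued map. -/
def cplx {d N : ℕ} (u : Rd d → Vec N) : Rd d → (Fin N → ℂ) := fun x n => ((u x n : ℝ) : ℂ)

/-- Action on `ℂ^N` of (the complexification of) a real linear map on `ℝ^N`. -/
def matC {N : ℕ} (P : Vec N →ₗ[ℝ] Vec N) (v : Fin N → ℂ) : Fin N → ℂ :=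
  fun m => ∑ n, ((P (Pi.single n 1) m : ℝ) : ℂ) * v n

end HC

namespace HC

/-!
By the uniform boundedness principle, the weakly convergent family `ũ_ε` is bounded in `L^p`, and
by coercivity the energy bound controls `ε u_ε` in `L^p` on the soft inclusions. There the
`p`-Lipschitz estimate gives
`|f_{0,ε}(ε u_ε) - f_{0,ε}(ε u_ε - ε ũ_ε)| ≤ C ε (1 + |ε u_ε|^p + |ũ_ε|^p)`,
so the soft energies of `u_ε` and `v_ε = u_ε - ũ_ε` differ by `O(ε)`. The stiff energies of `u_ε`
and `ũ_ε` are equal because the two functions agree on the stiff part. The two inequalities are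
thus the superadditivity of `liminf` and the subadditivity of `limsup`; for the latter, the
`limsup` of the stiff energies is finite, so that no sum `∞ - ∞` occurs.
-/

section LpDuality

variable {α E : Type*} [MeasurableSpace α] {μ : Measure α}
  [NormedAddCommGroup E] {p q : ℝ} {f : α → E}

lemma integral_norm_rpow_eq_lpNorm_rpow (hp : 0 < p) (hf : AEStronglyMeasurable f μ) :
    ∫ x, ‖f x‖ ^ p ∂μ = lpNorm f (ENNReal.ofReal p) μ ^ p := by
  rw [lpNorm_eq_integral_norm_rpow_toReal (by simpa using hp) ENNReal.ofReal_ne_top hf,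
    ENNReal.toReal_ofReal hp.le, Real.rpow_inv_rpow _ hp.ne']
  exact integral_nonneg fun x => Real.rpow_nonneg (norm_nonneg _) _

variable [InnerProductSpace ℝ E]

/-- The duality map `x ↦ ‖x‖^(p-2) x` of a Hilbert space, which applied pointwise pairs
`f ∈ L^p` with a function in the dual space `L^p'` that norms it. -/
def dualityMap (p : ℝ) (x : E) : E := ‖x‖ ^ (p - 2) • x

lemma inner_dualityMap (hp : p ≠ 0) (x : E) : inner ℝ x (dualityMap p x) = ‖x‖ ^ p := by
  rcases eq_or_ne x 0 with rfl | hx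
  · simp [dualityMap, hp]
  · rw [dualityMap, real_inner_smul_right, real_inner_self_eq_norm_sq, ← Real.rpow_natCast,
      ← Real.rpow_add (norm_pos_iff.2 hx)]
    norm_num

lemma norm_dualityMap (hp : p ≠ 1) (x : E) : ‖dualityMap p x‖ = ‖x‖ ^ (p - 1) := by
  rcases eq_or_ne x 0 with rfl | hx
  · simp [dualityMap, Real.zero_rpow (sub_ne_zero.2 hp)]
  · rw [dualityMap, norm_smul, Real.norm_of_nonneg (Real.rpow_nonneg (norm_nonneg x) _),
      ← Real.rpow_add_one (norm_ne_zero_iff.2 hx)]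
    ring_nf

lemma eLpNorm_dualityMap (hpq : p.HolderConjugate q) :
    eLpNorm (fun x => dualityMap p (f x)) (ENNReal.ofReal q) μ =
      eLpNorm f (ENNReal.ofReal p) μ ^ (p - 1) := by
  have hexp : ENNReal.ofReal q * ENNReal.ofReal (p - 1) = ENNReal.ofReal p := by
    rw [← ENNReal.ofReal_mul hpq.symm.nonneg, mul_comm, hpq.sub_one_mul_conj]
  rw [← hexp, ← eLpNorm_norm_rpow f hpq.sub_one_pos, ← eLpNorm_norm]
  simp only [norm_dualityMap hpq.lt.ne']

lemma memLp_dualityMap (hpq : p.HolderConjugate q) (hf : MemLp f (ENNReal.ofReal p) μ) :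
    MemLp (fun x => dualityMap p (f x)) (ENNReal.ofReal q) μ := by
  refine ⟨(hf.1.norm.aemeasurable.pow_const _).aestronglyMeasurable.smul hf.1, ?_⟩
  rw [eLpNorm_dualityMap hpq]
  exact ENNReal.rpow_lt_top_of_nonneg hpq.sub_one_pos.le hf.eLpNorm_ne_top

lemma lpNorm_dualityMap (hpq : p.HolderConjugate q) (hf : MemLp f (ENNReal.ofReal p) μ) :
    lpNorm (fun x => dualityMap p (f x)) (ENNReal.ofReal q) μ =
      lpNorm f (ENNReal.ofReal p) μ ^ (p - 1) := by
  rw [← toReal_eLpNorm (memLp_dualityMap hpq hf).1, ← toReal_eLpNorm hf.1,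
    eLpNorm_dualityMap hpq, ENNReal.toReal_rpow]

lemma lpNorm_le_of_forall_abs_integral_inner_le (hpq : p.HolderConjugate q)
    (hf : MemLp f (ENNReal.ofReal p) μ) {K : ℝ} (hK : 0 ≤ K)
    (h : ∀ g : α → E, MemLp g (ENNReal.ofReal q) μ →
      |∫ x, inner ℝ (f x) (g x) ∂μ| ≤ K * lpNorm g (ENNReal.ofReal q) μ) :
    lpNorm f (ENNReal.ofReal p) μ ≤ K := by
  rcases (lpNorm_nonneg (f := f) (p := ENNReal.ofReal p) (μ := μ)).eq_or_lt with h0 | h0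
  · exact h0 ▸ hK
  have hpair := (le_abs_self _).trans (h _ (memLp_dualityMap hpq hf))
  simp only [inner_dualityMap hpq.pos.ne', integral_norm_rpow_eq_lpNorm_rpow hpq.pos hf.1,
    lpNorm_dualityMap hpq hf] at hpair
  refine le_of_mul_le_mul_right ?_ (Real.rpow_pos_of_pos h0 (p - 1))
  rwa [← Real.rpow_one_add' h0.le (by simpa using hpq.pos.ne'), add_sub_cancel]

lemma exists_forall_lpNorm_le [CompleteSpace E] (hpq : p.HolderConjugate q) {ι : Type*}
    {f : ι → α → E} (hf : ∀ i, MemLp (f i) (ENNReal.ofReal p) μ)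
    (h : ∀ g : α → E, MemLp g (ENNReal.ofReal q) μ →
      ∃ C, ∀ i, |∫ x, inner ℝ (f i x) (g x) ∂μ| ≤ C) :
    ∃ C, ∀ i, lpNorm (f i) (ENNReal.ofReal p) μ ≤ C := by
  have := hpq.ennrealOfReal
  have : Fact (1 ≤ ENNReal.ofReal p) := ⟨by simpa using hpq.lt.le⟩
  have : Fact (1 ≤ ENNReal.ofReal q) := ⟨by simpa using hpq.symm.lt.le⟩
  let T (i : ι) : Lp E (ENNReal.ofReal q) μ →L[ℝ] ℝ :=
    (innerSL ℝ).lpPairing μ (ENNReal.ofReal p) (ENNReal.ofReal q) ((hf i).toLp (f i))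
  have hT i (g : α → E) (hg : MemLp g (ENNReal.ofReal q) μ) :
      T i (hg.toLp g) = ∫ x, inner ℝ (f i x) (g x) ∂μ := by
    simp only [T, ContinuousLinearMap.lpPairing_eq_integral]
    refine integral_congr_ae ?_
    filter_upwards [(hf i).coeFn_toLp, hg.coeFn_toLp] with x hfx hgx
    rw [hfx, hgx, innerSL_apply_apply]
  obtain ⟨C, hC⟩ : ∃ C, ∀ i, ‖T i‖ ≤ C := by
    refine banach_steinhaus fun g => ?_
    obtain ⟨C, hC⟩ := h g (Lp.memLp g)
    refine ⟨C, fun i => ?_⟩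
    rw [← Lp.toLp_coeFn g (Lp.memLp g), hT]
    exact hC i
  refine ⟨max C 0, fun i => lpNorm_le_of_forall_abs_integral_inner_le hpq (hf i)
    (le_max_right C 0) fun g hg => ?_⟩
  rw [← hT i g hg, ← Real.norm_eq_abs, ← toReal_eLpNorm hg.1, ← Lp.norm_toLp g hg]
  exact (T i).le_of_opNorm_le ((hC i).trans (le_max_left C 0)) _

lemma isBoundedUnder_lpNorm [CompleteSpace E] (hpq : p.HolderConjugate q) {ι : Type*}
    {l : Filter ι} [l.IsCountablyGenerated] {f : ι → α → E}
    (hf : ∀ᶠ i in l, MemLp (f i) (ENNReal.ofReal p) μ)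
    (h : ∀ g : α → E, MemLp g (ENNReal.ofReal q) μ →
      l.IsBoundedUnder (· ≤ ·) fun i => |∫ x, inner ℝ (f i x) (g x) ∂μ|) :
    l.IsBoundedUnder (· ≤ ·) fun i => lpNorm (f i) (ENNReal.ofReal p) μ := by
  -- Uniform boundedness holds for sequences; unboundedness along `l` would produce one.
  by_contra hunbdd
  obtain ⟨s, hs⟩ := l.exists_antitone_basis
  have hlarge (n : ℕ) : ∃ i ∈ s n, MemLp (f i) (ENNReal.ofReal p) μ ∧
      n < lpNorm (f i) (ENNReal.ofReal p) μ := by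
    by_contra! hsmall
    refine hunbdd ⟨n, eventually_map.2 ?_⟩
    filter_upwards [hs.mem n, hf] with i using hsmall i
  choose k hks hkf hkn using hlarge
  obtain ⟨C, hC⟩ := exists_forall_lpNorm_le hpq hkf fun g hg => by
    obtain ⟨C, hC⟩ := ((hs.tendsto hks).isBoundedUnder_comp (h g hg)).bddAbove_range
    exact ⟨C, fun n => hC ⟨n, rfl⟩⟩
  obtain ⟨n, hn⟩ := exists_nat_gt C
  exact (hC n).not_gt (hn.trans (hkn n))

end LpDuality

section Coordinates

variable {N : ℕ}

lemma eN_eq_norm_toLp (ξ : Vec N) : eN ξ = ‖(WithLp.toLp 2 ξ : EuclideanSpace ℝ (Fin N))‖ := by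
  simp [eN, EuclideanSpace.norm_eq]

lemma dot_eq_inner_toLp (ξ ζ : Vec N) :
    dot ξ ζ = inner ℝ (WithLp.toLp 2 ξ : EuclideanSpace ℝ (Fin N)) (WithLp.toLp 2 ζ) := by
  simp [dot, PiLp.inner_apply, mul_comm]

lemma dot_smul_left (c : ℝ) (ξ ζ : Vec N) : dot (c • ξ) ζ = c * dot ξ ζ :=
  smul_dotProduct c ξ ζ

lemma dot_sub_left (ξ η ζ : Vec N) : dot (ξ - η) ζ = dot ξ ζ - dot η ζ :=
  sub_dotProduct ξ η ζ

lemma eN_nonneg (ξ : Vec N) : 0 ≤ eN ξ := Real.sqrt_nonneg _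

lemma eN_rpow_nonneg (ξ : Vec N) (p : ℝ) : 0 ≤ eN ξ ^ p := Real.rpow_nonneg (eN_nonneg ξ) p

lemma eN_smul (c : ℝ) (ξ : Vec N) : eN (c • ξ) = |c| * eN ξ := by
  simp only [eN_eq_norm_toLp, WithLp.toLp_smul, norm_smul, Real.norm_eq_abs]

lemma eN_sub_le (ξ ζ : Vec N) : eN (ξ - ζ) ≤ eN ξ + eN ζ := by
  simpa only [eN_eq_norm_toLp, WithLp.toLp_sub] using norm_sub_le _ _

variable {α : Type*} [MeasurableSpace α] {μ : Measure α} {p q : ℝ}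

lemma memLp_toLp_comp {r : ℝ≥0∞} {w : α → Vec N} (hw : MemLp w r μ) :
    MemLp (fun x => (WithLp.toLp 2 (w x) : EuclideanSpace ℝ (Fin N))) r μ :=
  (EuclideanSpace.equiv (Fin N) ℝ).symm.toContinuousLinearMap.comp_memLp' hw

lemma memLp_ofLp_comp {r : ℝ≥0∞} {w : α → EuclideanSpace ℝ (Fin N)} (hw : MemLp w r μ) :
    MemLp (fun x => WithLp.ofLp (w x)) r μ :=
  (EuclideanSpace.equiv (Fin N) ℝ).toContinuousLinearMap.comp_memLp' hw

lemma integrable_dot (hpq : p.HolderConjugate q) {w g : α → Vec N}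
    (hw : MemLp w (ENNReal.ofReal p) μ) (hg : MemLp g (ENNReal.ofReal q) μ) :
    Integrable (fun x => dot (w x) (g x)) μ := by
  have := hpq.ennrealOfReal
  simp only [dot_eq_inner_toLp]
  exact memLp_one_iff_integrable.1
    ((innerSL ℝ).memLp_of_bilin 1 (memLp_toLp_comp hw) (memLp_toLp_comp hg))

lemma integrable_eN_rpow (hp : 0 < p) {w : α → Vec N} (hw : MemLp w (ENNReal.ofReal p) μ) :
    Integrable (fun x => eN (w x) ^ p) μ := by
  simpa only [eN_eq_norm_toLp, ENNReal.toReal_ofReal hp.le] using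
    (memLp_toLp_comp hw).integrable_norm_rpow (by simpa using hp) ENNReal.ofReal_ne_top

lemma integral_eN_rpow_eq_lpNorm_rpow (hp : 0 < p) {w : α → Vec N}
    (hw : MemLp w (ENNReal.ofReal p) μ) :
    ∫ x, eN (w x) ^ p ∂μ =
      lpNorm (fun x => (WithLp.toLp 2 (w x) : EuclideanSpace ℝ (Fin N)))
        (ENNReal.ofReal p) μ ^ p := by
  simpa only [eN_eq_norm_toLp] using integral_norm_rpow_eq_lpNorm_rpow hp (memLp_toLp_comp hw).1

end Coordinates

section WeakConvergence

variable {d N : ℕ} {p : ℝ} {O : Set (Rd d)} {ι : Type*} {l : Filter ι}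

lemma holderConjugate_conjExp (hp : 1 < p) : p.HolderConjugate (conjExp p) :=
  Real.HolderConjugate.conjExponent hp

lemma WeakLpTendsto.smul {w : ι → Rd d → Vec N} {v : Rd d → Vec N} {η : ι → ℝ} {c : ℝ}
    (hη : Tendsto η l (𝓝 c)) (hw : WeakLpTendsto p O l w v) :
    WeakLpTendsto p O l (fun k x => η k • w k x) (fun x => c • v x) := fun g hg => by
  simpa only [dot_smul_left, integral_const_mul] using hη.mul (hw g hg)

lemma WeakLpTendsto.sub (hp : 1 < p) {w w' : ι → Rd d → Vec N} {v v' : Rd d → Vec N}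
    (hw : ∀ᶠ k in l, MemLpOn p O (w k)) (hw' : ∀ᶠ k in l, MemLpOn p O (w' k))
    (hv : MemLpOn p O v) (hv' : MemLpOn p O v')
    (h : WeakLpTendsto p O l w v) (h' : WeakLpTendsto p O l w' v') :
    WeakLpTendsto p O l (fun k x => w k x - w' k x) (fun x => v x - v' x) := fun g hg => by
  have integral_dot_sub {f f' : Rd d → Vec N} (hf : MemLpOn p O f) (hf' : MemLpOn p O f') :
      ∫ x in O, dot (f x - f' x) (g x) =
        (∫ x in O, dot (f x) (g x)) - ∫ x in O, dot (f' x) (g x) := by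
    simp only [dot_sub_left]
    exact integral_sub (integrable_dot (holderConjugate_conjExp hp) hf hg)
      (integrable_dot (holderConjugate_conjExp hp) hf' hg)
  rw [integral_dot_sub hv hv']
  refine ((h g hg).sub (h' g hg)).congr' ?_
  filter_upwards [hw, hw'] with k hk hk'
  exact (integral_dot_sub hk hk').symm

lemma WeakLpTendsto.smul_sub (hp : 1 < p) {w w' : ι → Rd d → Vec N} {v' : Rd d → Vec N}
    {η : ι → ℝ} (hη : Tendsto η l (𝓝 0)) (hw : ∀ᶠ k in l, MemLpOn p O (w k))
    (hw' : ∀ᶠ k in l, MemLpOn p O (w' k)) (h : WeakLpTendsto p O l (fun k x => η k • w k x) 0)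
    (h' : WeakLpTendsto p O l w' v') :
    WeakLpTendsto p O l (fun k x => η k • (w k x - w' k x)) 0 := by
  have hw'_smul : WeakLpTendsto p O l (fun k x => η k • w' k x) (fun _ => 0) := by
    simpa only [zero_smul] using h'.smul hη
  have hsub : WeakLpTendsto p O l (fun k x => η k • w k x - η k • w' k x) (fun _ => 0 - 0) :=
    h.sub hp (hw.mono fun k hk => hk.const_smul (η k)) (hw'.mono fun k hk => hk.const_smul (η k))
      .zero .zero' hw'_smul
  simp only [← _root_.smul_sub, sub_zero] at hsub
  exact hsub

lemma WeakLpTendsto.isBoundedUnder_integral_eN_rpow [l.IsCountablyGenerated] (hp : 1 < p)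
    {w : ι → Rd d → Vec N} {v : Rd d → Vec N} (hw : ∀ᶠ k in l, MemLpOn p O (w k))
    (h : WeakLpTendsto p O l w v) :
    l.IsBoundedUnder (· ≤ ·) fun k => ∫ x in O, eN (w k x) ^ p := by
  obtain ⟨C, hC⟩ := isBoundedUnder_lpNorm (holderConjugate_conjExp hp)
    (hw.mono fun k hk => memLp_toLp_comp hk) fun g hg => by
      simpa only [dot_eq_inner_toLp] using (h _ (memLp_ofLp_comp hg)).abs.isBoundedUnder_le
  refine ⟨C ^ p, eventually_map.2 ?_⟩
  filter_upwards [hw, eventually_map.1 hC] with k hk hkC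
  rw [integral_eN_rpow_eq_lpNorm_rpow (one_pos.trans hp) hk]
  exact Real.rpow_le_rpow lpNorm_nonneg hkC (one_pos.trans hp).le

end WeakConvergence

section AFree

variable {d N M : ℕ} {p : ℝ} {A : Fin d → (Vec N →ₗ[ℝ] Vec M)} {O : Set (Rd d)}

lemma memLpOn_adjApply {ψ : Rd d → Vec M} (hψ : TestOn O ψ) (q : ℝ) :
    MemLpOn q O (adjApply A ψ) := by
  obtain ⟨hsmooth, hcompact, -⟩ := hψ
  have hderiv : Continuous (fderiv ℝ ψ) := hsmooth.continuous_fderiv (by simp)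
  have hcont : Continuous (adjApply A ψ) := by
    unfold adjApply dot
    fun_prop
  have hsupp : HasCompactSupport (adjApply A ψ) := by
    refine (hcompact.fderiv ℝ).mono fun x hx => ?_
    contrapose! hx
    simp only [Function.mem_support, not_not] at hx ⊢
    ext n
    simp [adjApply, hx, dot]
  exact (hcont.memLp_of_hasCompactSupport hsupp).restrict O

lemma AFreeOn.of_weakLpTendsto {ι : Type*} {l : Filter ι} [l.NeBot] {w : ι → Rd d → Vec N}
    {v : Rd d → Vec N} (hw : ∀ᶠ k in l, AFreeOn A O (w k)) (h : WeakLpTendsto p O l w v) :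
    AFreeOn A O v := fun ψ hψ =>
  tendsto_nhds_unique (h _ (memLpOn_adjApply hψ _))
    (tendsto_const_nhds.congr' (hw.mono fun _ hk => (hk ψ hψ).symm))

lemma sub_mem_U1 (hp : 1 < p) {w w' : Rd d → Vec N} (hw : w ∈ U1 p A O) (hw' : w' ∈ U1 p A O) :
    (fun x => w x - w' x) ∈ U1 p A O := by
  refine ⟨hw.1.sub hw'.1, fun ψ hψ => ?_⟩
  have hint {f : Rd d → Vec N} (hf : MemLpOn p O f) :=
    integrable_dot (holderConjugate_conjExp hp) hf (memLpOn_adjApply (A := A) hψ _)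
  simp only [dot_sub_left]
  rw [integral_sub (hint hw.1) (hint hw'.1), hw.2 ψ hψ, hw'.2 ψ hψ, sub_zero]

end AFree

section Densities

variable {N : ℕ} {p a lam Lam mu : ℝ}

/-- Two-sided `p`-growth of an energy density: the pointwise content of the hypotheses
`H3soft` and `H3stiff`. -/
def PGrowth (p a lam Lam : ℝ) (f : Vec N → ℝ) : Prop :=
  ∀ ξ, lam * (-a + eN ξ ^ p) ≤ f ξ ∧ f ξ ≤ Lam * (1 + eN ξ ^ p)

/-- The `p`-Lipschitz estimate of an energy density: the pointwise content of the hypothesis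
`H4soft`. -/
def PLipschitz (p mu : ℝ) (f : Vec N → ℝ) : Prop :=
  ∀ ξ ζ, |f ξ - f ζ| ≤ mu * (1 + eN ξ ^ (p - 1) + eN ζ ^ (p - 1)) * eN (ξ - ζ)

lemma one_add_rpow_add_rpow_mul_le {α β γ ε : ℝ} (hp : 1 ≤ p) (hε : 0 ≤ ε) (hε1 : ε ≤ 1)
    (hα : 0 ≤ α) (hβ : 0 ≤ β) (hγ : 0 ≤ γ) (hγ_le : γ ≤ α + ε * β) :
    (1 + α ^ (p - 1) + γ ^ (p - 1)) * (ε * β) ≤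
      ε * (3 * 2 ^ (p - 1)) * (1 + α ^ p + β ^ p) := by
  set m := max 1 (max α β)
  have one_le_m : 1 ≤ m := le_max_left _ _
  have hαm : α ≤ m := (le_max_left α β).trans (le_max_right _ _)
  have hβm : β ≤ m := (le_max_right α β).trans (le_max_right _ _)
  have hεβ : ε * β ≤ β := mul_le_of_le_one_left hβ hε1
  have rpow_le {t : ℝ} (ht : 0 ≤ t) (htm : t ≤ 2 * m) : t ^ (p - 1) ≤ (2 * m) ^ (p - 1) :=
    Real.rpow_le_rpow ht htm (sub_nonneg.2 hp)
  have hsum : 1 + α ^ (p - 1) + γ ^ (p - 1) ≤ 3 * (2 * m) ^ (p - 1) := by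
    have h_one := rpow_le zero_le_one (by linarith)
    rw [Real.one_rpow] at h_one
    linarith [rpow_le hα (by linarith), rpow_le hγ (by linarith)]
  have hm_rpow : m ^ p ≤ 1 + α ^ p + β ^ p := by
    have hα_rpow := Real.rpow_nonneg hα p
    have hβ_rpow := Real.rpow_nonneg hβ p
    rcases max_choice 1 (max α β) with h | h <;> rcases max_choice α β with h' | h' <;>
      simp only [m, h, h', Real.one_rpow] <;> linarith
  calc (1 + α ^ (p - 1) + γ ^ (p - 1)) * (ε * β)
      ≤ 3 * (2 * m) ^ (p - 1) * (ε * m) := by gcongr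
    _ = ε * (3 * 2 ^ (p - 1)) * m ^ p := by
      rw [Real.mul_rpow zero_le_two (by positivity), ← add_sub_cancel 1 p,
        Real.rpow_one_add' (by positivity) (by linarith), add_sub_cancel]
      ring
    _ ≤ ε * (3 * 2 ^ (p - 1)) * (1 + α ^ p + β ^ p) := by gcongr

lemma PLipschitz.abs_sub_le {f : Vec N → ℝ} (hf : PLipschitz p mu f) (hp : 1 ≤ p)
    (hmu : 0 ≤ mu) {ε : ℝ} (hε : 0 ≤ ε) (hε1 : ε ≤ 1) (ξ η : Vec N) :
    |f ξ - f (ξ - ε • η)| ≤ ε * (3 * 2 ^ (p - 1) * mu) * (1 + eN ξ ^ p + eN η ^ p) := by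
  have heN_smul : eN (ε • η) = ε * eN η := by rw [eN_smul, abs_of_nonneg hε]
  have hγ : eN (ξ - ε • η) ≤ eN ξ + ε * eN η := heN_smul ▸ eN_sub_le ξ (ε • η)
  calc |f ξ - f (ξ - ε • η)|
      ≤ mu * (1 + eN ξ ^ (p - 1) + eN (ξ - ε • η) ^ (p - 1)) * (ε * eN η) := by
        simpa only [sub_sub_cancel, heN_smul] using hf ξ (ξ - ε • η)
    _ = mu * ((1 + eN ξ ^ (p - 1) + eN (ξ - ε • η) ^ (p - 1)) * (ε * eN η)) := mul_assoc _ _ _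
    _ ≤ mu * (ε * (3 * 2 ^ (p - 1)) * (1 + eN ξ ^ p + eN η ^ p)) :=
        mul_le_mul_of_nonneg_left (one_add_rpow_add_rpow_mul_le hp hε hε1 (eN_nonneg _)
          (eN_nonneg _) (eN_nonneg _) hγ) hmu
    _ = ε * (3 * 2 ^ (p - 1) * mu) * (1 + eN ξ ^ p + eN η ^ p) := by ring

variable {α : Type*} [MeasurableSpace α] {μ : Measure α}

lemma integrable_of_pGrowth [IsFiniteMeasure μ] (hp : 0 < p) {g : α → Vec N → ℝ} {w : α → Vec N}
    (hg : ∀ x, PGrowth p a lam Lam (g x)) (hgw : AEStronglyMeasurable (fun x => g x (w x)) μ)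
    (hw : MemLp w (ENNReal.ofReal p) μ) : Integrable (fun x => g x (w x)) μ :=
  have hint := integrable_eN_rpow hp hw
  integrable_of_le_of_le hgw (Eventually.of_forall fun x => (hg x (w x)).1)
    (Eventually.of_forall fun x => (hg x (w x)).2)
    (((integrable_const (-a)).add hint).const_mul lam)
    (((integrable_const (1 : ℝ)).add hint).const_mul Lam)

lemma mul_setIntegral_eN_rpow_le_of_pGrowth {S T : Set α} (hST : S ⊆ T)
    (hT : μ T ≠ ∞) (hp : 0 < p) (ha : 0 ≤ a) (hlam : 0 ≤ lam) {g : α → Vec N → ℝ}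
    {w : α → Vec N} (hg : ∀ x, PGrowth p a lam Lam (g x))
    (hgw : AEStronglyMeasurable (fun x => g x (w x)) (μ.restrict S))
    (hw : MemLp w (ENNReal.ofReal p) (μ.restrict S)) :
    lam * ∫ x in S, eN (w x) ^ p ∂μ ≤ (∫ x in S, g x (w x) ∂μ) + lam * a * μ.real T := by
  have : IsFiniteMeasure (μ.restrict S) :=
    isFiniteMeasure_restrict.2 (measure_ne_top_of_subset hST hT)
  have hint := integrable_eN_rpow hp hw
  have hmono : ∫ x in S, lam * (-a + eN (w x) ^ p) ∂μ ≤ ∫ x in S, g x (w x) ∂μ :=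
    integral_mono (((integrable_const (-a)).add hint).const_mul lam)
      (integrable_of_pGrowth hp hg hgw hw) fun x => (hg x (w x)).1
  rw [integral_const_mul, integral_add (integrable_const _) hint, integral_const,
    measureReal_restrict_apply_univ, smul_eq_mul] at hmono
  have hmeasure : lam * a * μ.real S ≤ lam * a * μ.real T :=
    mul_le_mul_of_nonneg_left (measureReal_mono hST hT) (mul_nonneg hlam ha)
  linarith

lemma neg_mul_measureReal_le_setIntegral_of_pGrowth {S T : Set α} (hST : S ⊆ T)
    (hT : μ T ≠ ∞) (hp : 0 < p) (ha : 0 ≤ a) (hlam : 0 ≤ lam) {g : α → Vec N → ℝ}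
    {w : α → Vec N} (hg : ∀ x, PGrowth p a lam Lam (g x))
    (hgw : AEStronglyMeasurable (fun x => g x (w x)) (μ.restrict S))
    (hw : MemLp w (ENNReal.ofReal p) (μ.restrict S)) :
    -(lam * a * μ.real T) ≤ ∫ x in S, g x (w x) ∂μ := by
  have hcoercive := mul_setIntegral_eN_rpow_le_of_pGrowth hST hT hp ha hlam hg hgw hw
  have hnonneg : 0 ≤ ∫ x in S, eN (w x) ^ p ∂μ :=
    integral_nonneg fun x => eN_rpow_nonneg _ p
  linarith [mul_nonneg hlam hnonneg]

lemma PLipschitz.abs_integral_sub_le [IsFiniteMeasure μ] {f : Vec N → ℝ}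
    (hf : PLipschitz p mu f) (hgrowth : PGrowth p a lam Lam f) (hcont : Continuous f)
    (hp : 1 ≤ p) (hmu : 0 ≤ mu) {ε : ℝ} (hε : 0 ≤ ε) (hε1 : ε ≤ 1) {w η : α → Vec N}
    (hw : MemLp w (ENNReal.ofReal p) μ) (hη : MemLp η (ENNReal.ofReal p) μ) :
    |(∫ x, f (w x) ∂μ) - ∫ x, f (w x - ε • η x) ∂μ| ≤
      ε * (3 * 2 ^ (p - 1) * mu) *
        (μ.real univ + (∫ x, eN (w x) ^ p ∂μ) + ∫ x, eN (η x) ^ p ∂μ) := by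
  have hp0 : 0 < p := one_pos.trans_le hp
  have hint {ζ : α → Vec N} (hζ : MemLp ζ (ENNReal.ofReal p) μ) :
      Integrable (fun x => f (ζ x)) μ :=
    integrable_of_pGrowth hp0 (fun _ => hgrowth) (hcont.comp_aestronglyMeasurable hζ.1) hζ
  have hw_int : Integrable (fun x => 1 + eN (w x) ^ p) μ :=
    (integrable_const _).add (integrable_eN_rpow hp0 hw)
  have hη_int := integrable_eN_rpow hp0 hη
  have hsub_int : Integrable (fun x => f (w x - ε • η x)) μ := hint (hw.sub (hη.const_smul ε))
  calc |(∫ x, f (w x) ∂μ) - ∫ x, f (w x - ε • η x) ∂μ|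
      = ‖∫ x, (f (w x) - f (w x - ε • η x)) ∂μ‖ := by
        rw [integral_sub (hint hw) hsub_int, Real.norm_eq_abs]
    _ ≤ ∫ x, ε * (3 * 2 ^ (p - 1) * mu) * (1 + eN (w x) ^ p + eN (η x) ^ p) ∂μ :=
        norm_integral_le_of_norm_le ((hw_int.add hη_int).const_mul _)
          (Eventually.of_forall fun x => hf.abs_sub_le hp hmu hε hε1 (w x) (η x))
    _ = _ := by
        rw [integral_const_mul, integral_add hw_int hη_int,
          integral_add (integrable_const _) (integrable_eN_rpow hp0 hw), integral_const,
          smul_eq_mul, mul_one]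

end Densities

section Energies

variable {d N : ℕ} {p a lam Lam mu ε : ℝ} {Ω D0 : Set (Rd d)}
  {f0 : ℝ → Vec N → ℝ} {f1 : Rd d → Vec N → ℝ} {u w : Rd d → Vec N}

lemma softPart_subset (ε : ℝ) (Ω D0 : Set (Rd d)) : softPart ε Ω D0 ⊆ Ω :=
  Set.iUnion₂_subset fun _ h => h

lemma stiffPart_subset (ε : ℝ) (Ω D0 : Set (Rd d)) : stiffPart ε Ω D0 ⊆ Ω :=
  Set.sdiff_subset

/-- The integral part of the soft energy `F_{0,ε}`, without the constraint `𝒜 u = 0`. -/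
def softEnergy (f0 : ℝ → Vec N → ℝ) (Ω D0 : Set (Rd d)) (ε : ℝ) (u : Rd d → Vec N) : ℝ :=
  ∫ x in softPart ε Ω D0, f0 ε (ε • u x)

/-- The integral part of the stiff energy `F_{1,ε}`, without the constraint `𝒜 u = 0`. -/
def stiffEnergy (f1 : Rd d → Vec N → ℝ) (Ω D0 : Set (Rd d)) (ε : ℝ) (u : Rd d → Vec N) : ℝ :=
  ∫ x in stiffPart ε Ω D0, f1 (ε⁻¹ • x) (u x)

lemma stiffEnergy_congr (h : ∀ᵐ x ∂volume.restrict (stiffPart ε Ω D0), u x = w x) :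
    stiffEnergy f1 Ω D0 ε u = stiffEnergy f1 Ω D0 ε w :=
  integral_congr_ae (h.mono fun x hx => congrArg (f1 (ε⁻¹ • x)) hx)

lemma MemLpOn.mono (hu : MemLpOn p Ω u) {S : Set (Rd d)} (hS : S ⊆ Ω) : MemLpOn p S u :=
  hu.mono_measure (Measure.restrict_mono_set volume hS)

lemma mul_setIntegral_eN_rpow_le_softEnergy_add (hp : 0 < p) (hΩ : volume Ω ≠ ∞)
    (h1 : H1soft f0) (h3 : H3soft p a lam Lam f0) (hε : 0 < ε) (hu : MemLpOn p Ω u) :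
    lam * ∫ x in softPart ε Ω D0, eN (ε • u x) ^ p ≤
      softEnergy f0 Ω D0 ε u + lam * a * volume.real Ω := by
  obtain ⟨ha, hlam, -, hgrowth⟩ := h3
  have hεu := (hu.mono (softPart_subset ε Ω D0)).const_smul ε
  exact mul_setIntegral_eN_rpow_le_of_pGrowth (g := fun _ => f0 ε) (softPart_subset ε Ω D0) hΩ hp
    ha.le hlam.le (fun _ => hgrowth ε hε) ((h1 ε hε).comp_aestronglyMeasurable hεu.1) hεu

lemma neg_mul_volume_le_softEnergy (hp : 0 < p) (hΩ : volume Ω ≠ ∞) (h1 : H1soft f0)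
    (h3 : H3soft p a lam Lam f0) (hε : 0 < ε) (hu : MemLpOn p Ω u) :
    -(lam * a * volume.real Ω) ≤ softEnergy f0 Ω D0 ε u := by
  obtain ⟨ha, hlam, -, hgrowth⟩ := h3
  have hεu := (hu.mono (softPart_subset ε Ω D0)).const_smul ε
  exact neg_mul_measureReal_le_setIntegral_of_pGrowth (g := fun _ => f0 ε)
    (softPart_subset ε Ω D0) hΩ hp ha.le hlam.le (fun _ => hgrowth ε hε)
    ((h1 ε hε).comp_aestronglyMeasurable hεu.1) hεu

lemma H1stiff.aestronglyMeasurable (h1 : H1stiff f1) {μ : Measure (Rd d)}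
    (hw : AEStronglyMeasurable w μ) (c : ℝ) :
    AEStronglyMeasurable (fun x => f1 (c • x) (w x)) μ :=
  have hf1 : Measurable fun y : Vec N × Rd d => f1 y.2 y.1 :=
    measurable_uncurry_of_continuous_of_measurable (u := fun ξ x => f1 x ξ) h1.2 h1.1
  (hf1.comp_aemeasurable
    (hw.aemeasurable.prodMk (measurable_const_smul c).aemeasurable)).aestronglyMeasurable

lemma neg_mul_volume_le_stiffEnergy (hp : 0 < p) (hΩ : volume Ω ≠ ∞) (h1 : H1stiff f1)
    (h3 : H3stiff p a lam Lam f1) (ε : ℝ) (hu : MemLpOn p Ω u) :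
    -(lam * a * volume.real Ω) ≤ stiffEnergy f1 Ω D0 ε u := by
  obtain ⟨ha, hlam, -, hgrowth⟩ := h3
  have hu_stiff := hu.mono (stiffPart_subset ε Ω D0)
  exact neg_mul_measureReal_le_setIntegral_of_pGrowth (g := fun x => f1 (ε⁻¹ • x))
    (stiffPart_subset ε Ω D0) hΩ hp ha.le hlam.le (fun x => hgrowth (ε⁻¹ • x))
    (h1.aestronglyMeasurable hu_stiff.1 ε⁻¹) hu_stiff

lemma abs_softEnergy_sub_le (hp : 1 ≤ p) (hΩ : volume Ω ≠ ∞) (h1 : H1soft f0)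
    (h3 : H3soft p a lam Lam f0) (h4 : H4soft p mu f0) (hε : 0 < ε) (hε1 : ε ≤ 1)
    (hu : MemLpOn p Ω u) (hw : MemLpOn p Ω w) :
    |softEnergy f0 Ω D0 ε u - softEnergy f0 Ω D0 ε (fun x => u x - w x)| ≤
      ε * (3 * 2 ^ (p - 1) * mu) * (volume.real Ω +
        (softEnergy f0 Ω D0 ε u + lam * a * volume.real Ω) / lam + ∫ x in Ω, eN (w x) ^ p) := by
  have hp0 : 0 < p := one_pos.trans_le hp
  have hmu := h4.1
  have hsub := softPart_subset ε Ω D0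
  have : IsFiniteMeasure (volume.restrict (softPart ε Ω D0)) :=
    isFiniteMeasure_restrict.2 (measure_ne_top_of_subset hsub hΩ)
  have hvolume : (volume.restrict (softPart ε Ω D0)).real univ ≤ volume.real Ω :=
    (measureReal_restrict_apply_univ _).trans_le (measureReal_mono hsub hΩ)
  have hu_le : ∫ x in softPart ε Ω D0, eN (ε • u x) ^ p ≤
      (softEnergy f0 Ω D0 ε u + lam * a * volume.real Ω) / lam :=
    (le_div_iff₀' h3.2.1).2 (mul_setIntegral_eN_rpow_le_softEnergy_add hp0 hΩ h1 h3 hε hu)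
  have hw_le : ∫ x in softPart ε Ω D0, eN (w x) ^ p ≤ ∫ x in Ω, eN (w x) ^ p :=
    setIntegral_mono_set (integrable_eN_rpow hp0 hw)
      (Eventually.of_forall fun x => eN_rpow_nonneg _ p) (Eventually.of_forall hsub)
  have hdiff := PLipschitz.abs_integral_sub_le (h4.2 ε hε) (h3.2.2.2 ε hε) (h1 ε hε) hp
    hmu.le hε.le hε1 ((hu.mono hsub).const_smul ε) (hw.mono hsub)
  simp only [Pi.smul_apply, ← smul_sub] at hdiff
  exact hdiff.trans (by gcongr)

lemma tendsto_softEnergy_sub (hp : 1 ≤ p) (hΩ : volume Ω ≠ ∞) (h1 : H1soft f0)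
    (h3 : H3soft p a lam Lam f0) (h4 : H4soft p mu f0) {u w : ℝ → Rd d → Vec N}
    (hu : ∀ ε, 0 < ε → MemLpOn p Ω (u ε)) (hw : ∀ ε, 0 < ε → MemLpOn p Ω (w ε))
    (hsoft : (𝓝[>] (0 : ℝ)).IsBoundedUnder (· ≤ ·) fun ε => softEnergy f0 Ω D0 ε (u ε))
    (hint : (𝓝[>] (0 : ℝ)).IsBoundedUnder (· ≤ ·) fun ε => ∫ x in Ω, eN (w ε x) ^ p) :
    Tendsto (fun ε => softEnergy f0 Ω D0 ε (u ε) - softEnergy f0 Ω D0 ε (fun x => u ε x - w ε x))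
      (𝓝[>] 0) (𝓝 0) := by
  obtain ⟨C, hC⟩ := hsoft
  obtain ⟨K, hK⟩ := hint
  have hlim : Tendsto (fun ε : ℝ => ε * (3 * 2 ^ (p - 1) * mu) *
      (volume.real Ω + (C + lam * a * volume.real Ω) / lam + K)) (𝓝[>] 0) (𝓝 0) := by
    refine tendsto_nhdsWithin_of_tendsto_nhds (Continuous.tendsto' (by fun_prop) _ _ ?_)
    rw [zero_mul, zero_mul]
  have hmu := h4.1
  have hlam := h3.2.1
  refine squeeze_zero_norm' ?_ hlim
  filter_upwards [Ioc_mem_nhdsGT one_pos, eventually_map.1 hC, eventually_map.1 hK]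
    with ε ⟨hε, hε1⟩ hεC hεK
  refine (abs_softEnergy_sub_le hp hΩ h1 h3 h4 hε hε1 (hu ε hε) (hw ε hε)).trans ?_
  gcongr

end Energies

section EnergyFunctionals

variable {d N M : ℕ} {p ε c : ℝ} {A : Fin d → (Vec N →ₗ[ℝ] Vec M)} {Ω D0 : Set (Rd d)}
  {f0 : ℝ → Vec N → ℝ} {f1 : Rd d → Vec N → ℝ} {u : Rd d → Vec N}

lemma mem_U1_of_Feps_le_coe (h : Feps p A Ω D0 f0 f1 ε u ≤ (c : EReal)) : u ∈ U1 p A Ω := by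
  by_contra hu
  rw [Feps, if_neg hu] at h
  exact h.not_gt (EReal.coe_lt_top c)

lemma Feps_eq_coe (hu : u ∈ U1 p A Ω) :
    Feps p A Ω D0 f0 f1 ε u =
      ((softEnergy f0 Ω D0 ε u + stiffEnergy f1 Ω D0 ε u : ℝ) : EReal) :=
  if_pos hu

lemma F0eps_eq_coe (hu : u ∈ U1 p A Ω) :
    F0eps p A Ω D0 f0 ε u = (softEnergy f0 Ω D0 ε u : EReal) :=
  if_pos hu

lemma F1eps_eq_coe (hu : u ∈ U1 p A Ω) :
    F1eps p A Ω D0 f1 ε u = (stiffEnergy f1 Ω D0 ε u : EReal) :=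
  if_pos hu

lemma softEnergy_add_stiffEnergy_le_of_Feps_le_coe
    (h : Feps p A Ω D0 f0 f1 ε u ≤ (c : EReal)) :
    softEnergy f0 Ω D0 ε u + stiffEnergy f1 Ω D0 ε u ≤ c := by
  rwa [Feps_eq_coe (mem_U1_of_Feps_le_coe h), EReal.coe_le_coe_iff] at h

end EnergyFunctionals

section ERealLimits

variable {ι : Type*} {l : Filter ι} {X Y Z : ι → ℝ}

lemma tendsto_coe_sub_of_tendsto_sub (h : Tendsto (fun k => X k - Y k) l (𝓝 0)) :
    Tendsto (fun k => ((X k - Y k : ℝ) : EReal)) l (𝓝 0) :=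
  (continuous_coe_real_ereal.tendsto 0).comp h

lemma liminf_coe_le_of_tendsto_sub [l.NeBot] (h : Tendsto (fun k => X k - Y k) l (𝓝 0)) :
    liminf (fun k => (Y k : EReal)) l ≤ liminf (fun k => (X k : EReal)) l := by
  have hadd := EReal.le_liminf_add (f := l) (u := fun k => (Y k : EReal))
    (v := fun k => ((X k - Y k : ℝ) : EReal))
  rw [(tendsto_coe_sub_of_tendsto_sub h).liminf_eq, add_zero] at hadd
  refine hadd.trans_eq (congrArg (liminf · l) (funext fun k => ?_))
  simp only [Pi.add_apply, ← EReal.coe_add, add_sub_cancel]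

lemma limsup_coe_le_of_tendsto_sub [l.NeBot] (h : Tendsto (fun k => X k - Y k) l (𝓝 0)) :
    limsup (fun k => (X k : EReal)) l ≤ limsup (fun k => (Y k : EReal)) l := by
  have hlim := (tendsto_coe_sub_of_tendsto_sub h).limsup_eq
  have hadd := EReal.limsup_add_le (f := l) (u := fun k => (Y k : EReal))
    (v := fun k => ((X k - Y k : ℝ) : EReal)) (.inr (hlim.trans_ne EReal.zero_ne_top))
    (.inr (hlim.trans_ne EReal.zero_ne_bot))
  rw [hlim, add_zero] at hadd
  refine (congrArg (limsup · l) (funext fun k => ?_)).trans_le hadd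
  simp only [Pi.add_apply, ← EReal.coe_add, add_sub_cancel]

lemma liminf_coe_add_liminf_coe_le_of_tendsto_sub [l.NeBot]
    (h : Tendsto (fun k => X k - Y k) l (𝓝 0)) :
    liminf (fun k => (Y k : EReal)) l + liminf (fun k => (Z k : EReal)) l ≤
      liminf (fun k => ((X k + Z k : ℝ) : EReal)) l :=
  calc liminf (fun k => (Y k : EReal)) l + liminf (fun k => (Z k : EReal)) l
      ≤ liminf ((fun k => (Y k : EReal)) + fun k => (Z k : EReal)) l := EReal.le_liminf_add
    _ = liminf (fun k => ((Y k + Z k : ℝ) : EReal)) l := by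
        simp only [EReal.coe_add, Pi.add_def]
    _ ≤ liminf (fun k => ((X k + Z k : ℝ) : EReal)) l :=
        liminf_coe_le_of_tendsto_sub (by simpa only [add_sub_add_right_eq_sub] using h)

lemma limsup_coe_ne_top (h : l.IsBoundedUnder (· ≤ ·) Z) :
    limsup (fun k => (Z k : EReal)) l ≠ ⊤ := by
  obtain ⟨B, hB⟩ := h
  have hle : limsup (fun k => (Z k : EReal)) l ≤ B :=
    limsup_le_of_le (h := (eventually_map.1 hB).mono fun _ => EReal.coe_le_coe)
  exact (hle.trans_lt (EReal.coe_lt_top B)).ne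

lemma limsup_coe_ne_bot [l.NeBot] (h : l.IsBoundedUnder (· ≥ ·) Z) :
    limsup (fun k => (Z k : EReal)) l ≠ ⊥ := by
  obtain ⟨b, hb⟩ := h
  have hle : b ≤ limsup (fun k => (Z k : EReal)) l :=
    le_limsup_of_frequently_le ((eventually_map.1 hb).mono fun _ => EReal.coe_le_coe).frequently
  exact ((EReal.bot_lt_coe b).trans_le hle).ne'

lemma limsup_coe_add_le_of_tendsto_sub [l.NeBot] (h : Tendsto (fun k => X k - Y k) l (𝓝 0))
    (hZ_le : l.IsBoundedUnder (· ≤ ·) Z) (hZ_ge : l.IsBoundedUnder (· ≥ ·) Z) :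
    limsup (fun k => ((X k + Z k : ℝ) : EReal)) l ≤
      limsup (fun k => (Y k : EReal)) l + limsup (fun k => (Z k : EReal)) l :=
  calc limsup (fun k => ((X k + Z k : ℝ) : EReal)) l
      ≤ limsup (fun k => ((Y k + Z k : ℝ) : EReal)) l :=
        limsup_coe_le_of_tendsto_sub (by simpa only [add_sub_add_right_eq_sub] using h)
    _ = limsup ((fun k => (Y k : EReal)) + fun k => (Z k : EReal)) l := by
        simp only [EReal.coe_add, Pi.add_def]
    _ ≤ limsup (fun k => (Y k : EReal)) l + limsup (fun k => (Z k : EReal)) l :=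
        EReal.limsup_add_le (.inr (limsup_coe_ne_top hZ_le)) (.inr (limsup_coe_ne_bot hZ_ge))

end ERealLimits

section Splitting

variable {d N M : ℕ} {p a lam Lam c : ℝ} {A : Fin d → (Vec N →ₗ[ℝ] Vec M)}
  {Ω D0 : Set (Rd d)} {f0 : ℝ → Vec N → ℝ} {f1 : Rd d → Vec N → ℝ} {u w : ℝ → Rd d → Vec N}

lemma isBoundedUnder_le_softEnergy (hp : 0 < p) (hΩ : volume Ω ≠ ∞) (h1 : H1stiff f1)
    (h3 : H3stiff p a lam Lam f1)
    (hbd : ∀ ε : ℝ, 0 < ε → Feps p A Ω D0 f0 f1 ε (u ε) ≤ (c : EReal)) :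
    (𝓝[>] (0 : ℝ)).IsBoundedUnder (· ≤ ·) fun ε => softEnergy f0 Ω D0 ε (u ε) := by
  refine ⟨c + lam * a * volume.real Ω, eventually_map.2 (eventually_mem_nhdsWithin.mono ?_)⟩
  intro ε hε
  have hsum := softEnergy_add_stiffEnergy_le_of_Feps_le_coe (hbd ε hε)
  have hstiff : -(lam * a * volume.real Ω) ≤ stiffEnergy f1 Ω D0 ε (u ε) :=
    neg_mul_volume_le_stiffEnergy hp hΩ h1 h3 ε (mem_U1_of_Feps_le_coe (hbd ε hε)).1
  linarith

lemma isBoundedUnder_le_stiffEnergy (hp : 0 < p) (hΩ : volume Ω ≠ ∞) (h1 : H1soft f0)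
    (h3 : H3soft p a lam Lam f0)
    (hbd : ∀ ε : ℝ, 0 < ε → Feps p A Ω D0 f0 f1 ε (u ε) ≤ (c : EReal)) :
    (𝓝[>] (0 : ℝ)).IsBoundedUnder (· ≤ ·) fun ε => stiffEnergy f1 Ω D0 ε (u ε) := by
  refine ⟨c + lam * a * volume.real Ω, eventually_map.2 (eventually_mem_nhdsWithin.mono ?_)⟩
  intro ε hε
  have hsum := softEnergy_add_stiffEnergy_le_of_Feps_le_coe (hbd ε hε)
  have hsoft : -(lam * a * volume.real Ω) ≤ softEnergy f0 Ω D0 ε (u ε) :=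
    neg_mul_volume_le_softEnergy hp hΩ h1 h3 hε (mem_U1_of_Feps_le_coe (hbd ε hε)).1
  linarith

lemma isBoundedUnder_ge_stiffEnergy (hp : 0 < p) (hΩ : volume Ω ≠ ∞) (h1 : H1stiff f1)
    (h3 : H3stiff p a lam Lam f1) (hu : ∀ ε : ℝ, 0 < ε → MemLpOn p Ω (u ε)) :
    (𝓝[>] (0 : ℝ)).IsBoundedUnder (· ≥ ·) fun ε => stiffEnergy f1 Ω D0 ε (u ε) :=
  ⟨-(lam * a * volume.real Ω), eventually_map.2 (eventually_mem_nhdsWithin.mono fun ε hε =>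
    neg_mul_volume_le_stiffEnergy hp hΩ h1 h3 ε (hu ε hε))⟩

lemma Feps_eventuallyEq (hu : ∀ ε : ℝ, 0 < ε → u ε ∈ U1 p A Ω) :
    (fun ε => Feps p A Ω D0 f0 f1 ε (u ε)) =ᶠ[𝓝[>] 0] fun ε =>
      ((softEnergy f0 Ω D0 ε (u ε) + stiffEnergy f1 Ω D0 ε (u ε) : ℝ) : EReal) :=
  eventually_mem_nhdsWithin.mono fun ε hε => Feps_eq_coe (hu ε hε)

lemma F0eps_eventuallyEq (hu : ∀ ε : ℝ, 0 < ε → u ε ∈ U1 p A Ω) :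
    (fun ε => F0eps p A Ω D0 f0 ε (u ε)) =ᶠ[𝓝[>] 0] fun ε =>
      (softEnergy f0 Ω D0 ε (u ε) : EReal) :=
  eventually_mem_nhdsWithin.mono fun ε hε => F0eps_eq_coe (hu ε hε)

lemma F1eps_eventuallyEq (hw : ∀ ε : ℝ, 0 < ε → w ε ∈ U1 p A Ω)
    (heq : ∀ ε : ℝ, 0 < ε → ∀ᵐ x ∂volume.restrict (stiffPart ε Ω D0), u ε x = w ε x) :
    (fun ε => F1eps p A Ω D0 f1 ε (w ε)) =ᶠ[𝓝[>] 0] fun ε =>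
      (stiffEnergy f1 Ω D0 ε (u ε) : EReal) :=
  eventually_mem_nhdsWithin.mono fun ε hε =>
    (F1eps_eq_coe (hw ε hε)).trans
      (congrArg ((↑) : ℝ → EReal) (stiffEnergy_congr (heq ε hε)).symm)

end Splitting

theorem splitting_lemma_general
    {d N M : ℕ} (p a lam Lam mu : ℝ) (hp : 1 < p)
    (Ω D0 : Set (Rd d)) (hΩ : volume Ω ≠ ∞)
    (A : Fin d → (Vec N →ₗ[ℝ] Vec M))
    (f0 : ℝ → Vec N → ℝ) (f1 : Rd d → Vec N → ℝ)
    (h1 : H1soft f0 ∧ H1stiff f1)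
    (h3 : H3soft p a lam Lam f0 ∧ H3stiff p a lam Lam f1)
    (h4 : H4soft p mu f0)
    (u ut : ℝ → Rd d → Vec N) (v : Rd d → Vec N)
    (hu0 : WeakLpTendsto p Ω (𝓝[>] (0 : ℝ)) (fun ε x => ε • u ε x) 0)
    (hut : ∀ ε : ℝ, 0 < ε → ut ε ∈ U1 p A Ω)
    (heq : ∀ ε : ℝ, 0 < ε → ∀ᵐ x ∂volume.restrict (stiffPart ε Ω D0), u ε x = ut ε x)
    (hutw : WeakLpTendsto p Ω (𝓝[>] (0 : ℝ)) ut v)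
    (c : ℝ) (hbd : ∀ ε : ℝ, 0 < ε → Feps p A Ω D0 f0 f1 ε (u ε) ≤ (c : EReal)) :
    AFreeOn A Ω v ∧
    (∀ ε : ℝ, 0 < ε →
      ∀ᵐ x ∂volume.restrict (stiffPart ε Ω D0), u ε x - ut ε x = 0) ∧
    (∀ ε : ℝ, 0 < ε → AFreeOn A Ω (fun x => u ε x - ut ε x)) ∧
    WeakLpTendsto p Ω (𝓝[>] (0 : ℝ)) (fun ε x => ε • (u ε x - ut ε x)) 0 ∧
    (liminf (fun ε => F0eps p A Ω D0 f0 ε (fun x => u ε x - ut ε x)) (𝓝[>] (0 : ℝ)) +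
        liminf (fun ε => F1eps p A Ω D0 f1 ε (ut ε)) (𝓝[>] (0 : ℝ)) ≤
      liminf (fun ε => Feps p A Ω D0 f0 f1 ε (u ε)) (𝓝[>] (0 : ℝ))) ∧
    (limsup (fun ε => Feps p A Ω D0 f0 f1 ε (u ε)) (𝓝[>] (0 : ℝ)) ≤
      limsup (fun ε => F0eps p A Ω D0 f0 ε (fun x => u ε x - ut ε x)) (𝓝[>] (0 : ℝ)) +
        limsup (fun ε => F1eps p A Ω D0 f1 ε (ut ε)) (𝓝[>] (0 : ℝ))) := by
  have hp0 : 0 < p := one_pos.trans hp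
  have hpos : ∀ᶠ ε : ℝ in 𝓝[>] 0, 0 < ε := eventually_mem_nhdsWithin
  have hu ε (hε : 0 < ε) : u ε ∈ U1 p A Ω := mem_U1_of_Feps_le_coe (hbd ε hε)
  have hsub ε (hε : 0 < ε) : (fun x => u ε x - ut ε x) ∈ U1 p A Ω :=
    sub_mem_U1 hp (hu ε hε) (hut ε hε)
  have hut_bdd : (𝓝[>] (0 : ℝ)).IsBoundedUnder (· ≤ ·) fun ε => ∫ x in Ω, eN (ut ε x) ^ p :=
    hutw.isBoundedUnder_integral_eN_rpow hp (hpos.mono fun ε hε => (hut ε hε).1)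
  have hsoft : Tendsto (fun ε => softEnergy f0 Ω D0 ε (u ε) -
      softEnergy f0 Ω D0 ε (fun x => u ε x - ut ε x)) (𝓝[>] 0) (𝓝 0) :=
    tendsto_softEnergy_sub hp.le hΩ h1.1 h3.1 h4 (fun ε hε => (hu ε hε).1)
      (fun ε hε => (hut ε hε).1) (isBoundedUnder_le_softEnergy hp0 hΩ h1.2 h3.2 hbd) hut_bdd
  refine ⟨.of_weakLpTendsto (hpos.mono fun ε hε => (hut ε hε).2) hutw,
    fun ε hε => (heq ε hε).mono fun x => sub_eq_zero_of_eq, fun ε hε => (hsub ε hε).2,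
    .smul_sub hp (tendsto_id'.2 nhdsWithin_le_nhds) (hpos.mono fun ε hε => (hu ε hε).1)
      (hpos.mono fun ε hε => (hut ε hε).1) hu0 hutw, ?_, ?_⟩
  · rw [liminf_congr (F0eps_eventuallyEq hsub), liminf_congr (F1eps_eventuallyEq hut heq),
      liminf_congr (Feps_eventuallyEq hu)]
    exact liminf_coe_add_liminf_coe_le_of_tendsto_sub hsoft
  · rw [limsup_congr (F0eps_eventuallyEq hsub), limsup_congr (F1eps_eventuallyEq hut heq),
      limsup_congr (Feps_eventuallyEq hu)]
    exact limsup_coe_add_le_of_tendsto_sub hsoft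
      (isBoundedUnder_le_stiffEnergy hp0 hΩ h1.1 h3.1 hbd)
      (isBoundedUnder_ge_stiffEnergy hp0 hΩ h1.2 h3.2 fun ε hε => (hu ε hε).1)

/-- splitting lemma.
If `u` is the high-contrast limit of `{u_ε}` (with witnesses `{ũ_ε}`) and the energies
are equibounded, then with `v_ε = u_ε − ũ_ε` the soft/stiff splitting estimates hold. -/
theorem splitting_lemma
    {d N M : ℕ} (p a lam Lam mu : ℝ) (hp : 1 < p)
    (Ω D0 : Set (Rd d)) (hset : GoodSetting d Ω D0)
    (A : Fin d → (Vec N →ₗ[ℝ] Vec M)) (hcr : ConstantRank A)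
    (f0 : ℝ → Vec N → ℝ) (f1 : Rd d → Vec N → ℝ) (f0lim : Vec N → ℝ)
    (h1 : H1soft f0 ∧ H1stiff f1) (h2 : H2 f1)
    (h3 : H3soft p a lam Lam f0 ∧ H3stiff p a lam Lam f1)
    (h4 : H4soft p mu f0 ∧ H4stiff p mu f1) (h5 : H5 f0 f0lim)
    (u ut : ℝ → Rd d → Vec N) (v : Rd d → Vec N)
    -- `u_ε → v` in the high-contrast sense, with witnesses `ũ_ε`:
    (hu0 : WeakLpTendsto p Ω (𝓝[>] (0 : ℝ)) (fun ε x => ε • u ε x) 0)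
    (hut : ∀ ε : ℝ, 0 < ε → MemLpOn p Ω (ut ε) ∧ AFreeOn A Ω (ut ε))
    (heq : ∀ ε : ℝ, 0 < ε → ∀ᵐ x ∂volume.restrict (stiffPart ε Ω D0), u ε x = ut ε x)
    (hutw : WeakLpTendsto p Ω (𝓝[>] (0 : ℝ)) ut v)
    (c : ℝ) (hc : -(a * lam) * (volume Ω).toReal ≤ c)
    (hbd : ∀ ε : ℝ, 0 < ε → Feps p A Ω D0 f0 f1 ε (u ε) ≤ (c : EReal)) :
    AFreeOn A Ω v ∧
    (∀ ε : ℝ, 0 < ε →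
      ∀ᵐ x ∂volume.restrict (stiffPart ε Ω D0), u ε x - ut ε x = 0) ∧
    (∀ ε : ℝ, 0 < ε → AFreeOn A Ω (fun x => u ε x - ut ε x)) ∧
    WeakLpTendsto p Ω (𝓝[>] (0 : ℝ)) (fun ε x => ε • (u ε x - ut ε x)) 0 ∧
    (Filter.liminf (fun ε => F0eps p A Ω D0 f0 ε (fun x => u ε x - ut ε x)) (𝓝[>] (0 : ℝ)) +
        Filter.liminf (fun ε => F1eps p A Ω D0 f1 ε (ut ε)) (𝓝[>] (0 : ℝ)) ≤
      Filter.liminf (fun ε => Feps p A Ω D0 f0 f1 ε (u ε)) (𝓝[>] (0 : ℝ))) ∧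
    (Filter.limsup (fun ε => Feps p A Ω D0 f0 f1 ε (u ε)) (𝓝[>] (0 : ℝ)) ≤
      Filter.limsup (fun ε => F0eps p A Ω D0 f0 ε (fun x => u ε x - ut ε x)) (𝓝[>] (0 : ℝ)) +
        Filter.limsup (fun ε => F1eps p A Ω D0 f1 ε (ut ε)) (𝓝[>] (0 : ℝ))) := by
  exact splitting_lemma_general p a lam Lam mu hp Ω D0 hset.2.2.2.1.measure_lt_top.ne A f0 f1
    h1 h3 h4.1 u ut v hu0 hut heq hutw c hbd

end HC
end
end

section
/- Let v ∈ L^p(Ω;ℝ^N) be such that A v = 0 in W^{−1,p}(Ω;ℝ^M). Then for every ε > 0 the unfolded map S_ε v satisfies A_y(S_ε v)(x,·) = 0 in W^{−1,p}(Q;ℝ^M) for a.e. x ∈ Ω̂_ε. Moreover, if in addition v = 0 in Ω_{1,ε}, then A_y(S_ε v)(x,·) = 0 in W^{−1,p}(𝕋^d;ℝ^M) for a.e. x ∈ Ω̂_ε. -/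
open MeasureTheory Filter Topology Metric Set
open scoped ENNReal NNReal

noncomputable section

attribute [local instance] Classical.propDecidable

namespace HC

/-! On a cell `ε (Q + z)` the map `x ↦ S_ε v (x, ·)` is constant, equal to `y ↦ ṽ (ε (y + z))`.
Freeness under `𝒜` is invariant under homotheties, so this function is `𝒜`-free on `Q` as soon as
`ε (Q + z) ⊆ Ω`. If `v` vanishes on the stiff part, it also vanishes off the compact subset
`closure D₀` of `Q`; multiplying a periodic test function by a cutoff which is `1` near
`closure D₀` then changes nothing in the integral and gives a test function on `Q`. -/

variable {d N M : ℕ}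

theorem dot_zero_left (u : Vec N) : dot 0 u = 0 := zero_dotProduct u

theorem dot_zero_right (u : Vec N) : dot u 0 = 0 := dotProduct_zero u

theorem dot_smul_right (c : ℝ) (u v : Vec N) : dot u (c • v) = c * dot u v :=
  dotProduct_smul c u v

theorem exists_contDiff_eq_one_nhdsSet {E : Type*} [NormedAddCommGroup E] [NormedSpace ℝ E]
    [FiniteDimensional ℝ E] {K U : Set E} (hK : IsCompact K) (hU : IsOpen U) (hKU : K ⊆ U) :
    ∃ χ : E → ℝ, ContDiff ℝ (⊤ : ℕ∞) χ ∧ HasCompactSupport χ ∧ tsupport χ ⊆ U ∧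
      ∀ᶠ x in 𝓝ˢ K, χ x = 1 := by
  obtain ⟨L, hL, hKL, hLU⟩ := exists_compact_between hK hU hKU
  obtain ⟨χ, hχ1, hχ0, -⟩ := exists_contMDiffMap_one_nhds_of_subset_interior
    (n := (⊤ : ℕ∞)) (modelWithCornersSelf ℝ E) hK.isClosed hKL
  have hsupp : tsupport χ ⊆ L :=
    closure_minimal (fun x hx => by_contra fun hxL => hx (hχ0 x hxL)) hL.isClosed
  exact ⟨χ, χ.contMDiff.contDiff, hL.of_isClosed_subset (isClosed_tsupport _) hsupp,
    hsupp.trans hLU, hχ1⟩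

section AdjApply

variable (A : Fin d → (Vec N →ₗ[ℝ] Vec M)) {ψ φ : Rd d → Vec M} {x : Rd d}

theorem adjApply_of_notMem_tsupport (hx : x ∉ tsupport ψ) : adjApply A ψ x = 0 := by
  ext n
  simp only [adjApply, fderiv_of_notMem_tsupport ℝ hx, zero_apply,
    dot_zero_right, Finset.sum_const_zero, neg_zero, Pi.zero_apply]

theorem adjApply_congr (h : ψ =ᶠ[𝓝 x] φ) : adjApply A ψ x = adjApply A φ x := by
  ext n
  simp only [adjApply, h.fderiv_eq]

theorem adjApply_comp_smul_add (c : ℝ) (b y : Rd d) :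
    adjApply A (fun y => φ (c • (y + b))) y = c • adjApply A φ (c • (y + b)) := by
  have hderiv : fderiv ℝ (fun y => φ (c • (y + b))) y = c • fderiv ℝ φ (c • (y + b)) := by
    rw [fderiv_comp_add_right (f := fun y => φ (c • y)), fderiv_comp_smul]
  ext n
  simp only [adjApply, hderiv, smul_apply, dot_smul_right, Pi.smul_apply, smul_eq_mul, mul_neg,
    Finset.mul_sum]

theorem setIntegral_dot_adjApply {O : Set (Rd d)} (u : Rd d → Vec N) (hψ : tsupport ψ ⊆ O) :
    ∫ x in O, dot (u x) (adjApply A ψ x) = ∫ x, dot (u x) (adjApply A ψ x) :=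
  setIntegral_eq_integral_of_forall_compl_eq_zero fun x hx => by
    rw [adjApply_of_notMem_tsupport A fun h => hx (hψ h), dot_zero_right]

end AdjApply

section TestOn

variable {O : Set (Rd d)} {ψ : Rd d → Vec M}

theorem TestOn.mono {O' : Set (Rd d)} (hψ : TestOn O ψ) (h : O ⊆ O') : TestOn O' ψ :=
  ⟨hψ.1, hψ.2.1, hψ.2.2.trans h⟩

theorem TestOn.comp_homeomorph (hψ : TestOn O ψ) (e : Rd d ≃ₜ Rd d)
    (he : ContDiff ℝ (⊤ : ℕ∞) e) : TestOn (e ⁻¹' O) (ψ ∘ e) := by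
  refine ⟨hψ.1.comp he, hψ.2.1.comp_homeomorph e, ?_⟩
  rw [tsupport_comp_eq_preimage]
  exact preimage_mono hψ.2.2

end TestOn

section AFreeOn

variable {A : Fin d → (Vec N →ₗ[ℝ] Vec M)} {O : Set (Rd d)} {u w : Rd d → Vec N}

theorem aFreeOn_iff_integral_eq_zero :
    AFreeOn A O u ↔ ∀ ψ, TestOn O ψ → ∫ x, dot (u x) (adjApply A ψ x) = 0 :=
  forall₂_congr fun ψ hψ => by rw [setIntegral_dot_adjApply A u hψ.2.2]

theorem AFreeOn.mono {O' : Set (Rd d)} (hu : AFreeOn A O' u) (h : O ⊆ O') : AFreeOn A O u := by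
  rw [aFreeOn_iff_integral_eq_zero] at hu ⊢
  exact fun ψ hψ => hu ψ (hψ.mono h)

theorem AFreeOn.congr (hu : AFreeOn A O u) (h : EqOn u w O) : AFreeOn A O w := by
  rw [aFreeOn_iff_integral_eq_zero] at hu ⊢
  intro ψ hψ
  rw [← hu ψ hψ]
  congr 1 with x
  by_cases hx : x ∈ O
  · rw [h hx]
  · rw [adjApply_of_notMem_tsupport A fun hxψ => hx (hψ.2.2 hxψ), dot_zero_right, dot_zero_right]

theorem AFreeOn.comp_smul_add (hu : AFreeOn A O u) {c : ℝ} (hc : c ≠ 0) (b : Rd d) :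
    AFreeOn A ((fun y => c • (y + b)) ⁻¹' O) (fun y => u (c • (y + b))) := by
  rw [aFreeOn_iff_integral_eq_zero] at hu ⊢
  intro ψ hψ
  let e : Rd d ≃ₜ Rd d := (Homeomorph.addRight b).trans (Homeomorph.smulOfNeZero c hc)
  let φ : Rd d → Vec M := ψ ∘ e.symm
  have hφ : TestOn O φ := by
    have he : ContDiff ℝ (⊤ : ℕ∞) e.symm := (contDiff_id.const_smul c⁻¹).add contDiff_const
    have hpre : e.symm ⁻¹' ((fun y => c • (y + b)) ⁻¹' O) = O := e.symm_preimage_preimage O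
    exact hpre ▸ hψ.comp_homeomorph e.symm he
  have hψφ : ψ = fun y => φ (c • (y + b)) :=
    funext fun y => congrArg ψ (e.symm_apply_apply y).symm
  let F : Rd d → ℝ := fun x => dot (u x) (adjApply A φ x)
  calc ∫ y, dot (u (c • (y + b))) (adjApply A ψ y)
      = ∫ y, c * F (c • (y + b)) := by
        simp only [hψφ, adjApply_comp_smul_add, dot_smul_right, F]
    _ = c * (|(c ^ Module.finrank ℝ (Rd d))⁻¹| * ∫ x, F x) := by
        rw [integral_const_mul, integral_add_right_eq_self (fun y => F (c • y)) b,
          Measure.integral_comp_smul, smul_eq_mul]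
    _ = 0 := by rw [hu φ hφ, mul_zero, mul_zero]

theorem AFreeOn.setIntegral_eq_zero_of_ae_eq_zero_off_compact {K : Set (Rd d)}
    (hu : AFreeOn A O u) (hO : IsOpen O) (hK : IsCompact K) (hKO : K ⊆ O)
    (hu0 : ∀ᵐ y ∂volume.restrict (O \ K), u y = 0) {ψ : Rd d → Vec M}
    (hψ : ContDiff ℝ (⊤ : ℕ∞) ψ) :
    ∫ y in O, dot (u y) (adjApply A ψ y) = 0 := by
  obtain ⟨χ, hχ, hχc, hχO, hχ1⟩ := exists_contDiff_eq_one_nhdsSet hK hO hKO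
  have htest : TestOn O (fun y => χ y • ψ y) :=
    ⟨hχ.smul hψ, hχc.smul_right, (tsupport_smul_subset_left χ ψ).trans hχO⟩
  rw [← hu _ htest]
  refine setIntegral_congr_ae hO.measurableSet ?_
  filter_upwards [ae_imp_of_ae_restrict hu0] with y hy hyO
  by_cases hyK : y ∈ K
  · have hψχ : ψ =ᶠ[𝓝 y] fun x => χ x • ψ x := by
      filter_upwards [hχ1.filter_mono (nhds_le_nhdsSet hyK)] with x hx
      rw [hx, one_smul]
    rw [adjApply_congr A hψχ]
  · rw [hy ⟨hyO, hyK⟩, dot_zero_left, dot_zero_left]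

end AFreeOn

section Cell

variable {ε : ℝ} {z : Fin d → ℤ} {Ω D0 : Set (Rd d)}

theorem isOpen_Qcube : IsOpen (Qcube d) := by
  simp only [Qcube, ofPred_forall]
  exact isOpen_iInter_of_finite fun i => isOpen_Ioo.preimage (continuous_apply i)

theorem isBounded_Qcube : Bornology.IsBounded (Qcube d) :=
  (isBounded_Icc 0 1).subset fun _ hx => ⟨fun i => (hx i).1.le, fun i => (hx i).2.le⟩

theorem isOpen_cell (hε : ε ≠ 0) {S : Set (Rd d)} (hS : IsOpen S) : IsOpen (cell ε z S) :=
  ((Homeomorph.addRight fun i => (z i : ℝ)).trans (Homeomorph.smulOfNeZero ε hε)).isOpenMap S hS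

theorem isOpen_hatOmega (hε : ε ≠ 0) : IsOpen (hatOmega ε Ω) :=
  isOpen_biUnion fun _ _ => isOpen_cell hε isOpen_Qcube

theorem floor_div_of_mem_cell (hε : ε ≠ 0) {x : Rd d} (hx : x ∈ cell ε z (Qcube d)) (i : Fin d) :
    ⌊x i / ε⌋ = z i := by
  obtain ⟨y, hy, rfl⟩ := hx
  rw [mul_div_cancel_left₀ _ hε, Int.floor_add_intCast,
    Int.floor_eq_zero_iff.2 (Ioo_subset_Ico_self (hy i)), zero_add]

theorem mapsTo_smul_tr_stiffPart (hε : ε ≠ 0) (hz : cell ε z (Qcube d) ⊆ Ω)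
    (hD0 : D0 ⊆ Qcube d) :
    MapsTo (fun y => ε • tr z y) (Qcube d \ D0) (stiffPart ε Ω D0) := by
  rintro y ⟨hyQ, hyD0⟩
  have hy : ε • tr z y ∈ cell ε z (Qcube d) := mem_image_of_mem _ hyQ
  refine ⟨hz hy, fun hsoft => hyD0 ?_⟩
  simp only [softPart, mem_iUnion] at hsoft
  obtain ⟨z', -, y', hy', hyy'⟩ := hsoft
  have hy'cell : ε • tr z y ∈ cell ε z' (Qcube d) := ⟨y', hD0 hy', hyy'⟩
  obtain rfl : z' = z := funext fun i =>
    (floor_div_of_mem_cell hε hy'cell i).symm.trans (floor_div_of_mem_cell hε hy i)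
  obtain rfl : y' = y := add_right_cancel (smul_right_injective _ hε hyy')
  exact hy'

theorem quasiMeasurePreserving_smul_tr (hε : ε ≠ 0) :
    Measure.QuasiMeasurePreserving (fun y : Rd d => ε • tr z y) :=
  (Measure.quasiMeasurePreserving_smul volume hε).comp
    (measurePreserving_add_right volume fun i => (z i : ℝ)).quasiMeasurePreserving

end Cell

section Unfold

variable {ε : ℝ} {Ω D0 : Set (Rd d)} {A : Fin d → (Vec N →ₗ[ℝ] Vec M)} {v : Rd d → Vec N}
  {x : Rd d}

theorem unfold_of_mem_cell (hε : ε ≠ 0) {z : Fin d → ℤ} (hx : x ∈ cell ε z (Qcube d)) :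
    unfold ε Ω v x = fun y => Ω.indicator v (ε • tr z y) := by
  ext1 y
  simp only [unfold, floor_div_of_mem_cell hε hx, add_comm (z _ : ℝ)]
  rfl

theorem aFreeOn_unfold (hv : AFreeOn A Ω v) (hε : ε ≠ 0) (hx : x ∈ hatOmega ε Ω) :
    AFreeOn A (Qcube d) (unfold ε Ω v x) := by
  obtain ⟨z, hz, hxz⟩ := mem_iUnion₂.1 hx
  rw [unfold_of_mem_cell hε hxz]
  exact ((hv.congr (eqOn_indicator (s := Ω)).symm).comp_smul_add hε _).mono (image_subset_iff.1 hz)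

theorem ae_unfold_eq_zero (hε : ε ≠ 0) (hD0 : D0 ⊆ Qcube d)
    (hv0 : ∀ᵐ x ∂volume.restrict (stiffPart ε Ω D0), v x = 0) (hx : x ∈ hatOmega ε Ω) :
    ∀ᵐ y ∂volume.restrict (Qcube d \ D0), unfold ε Ω v x y = 0 := by
  obtain ⟨z, hz, hxz⟩ := mem_iUnion₂.1 hx
  rw [unfold_of_mem_cell hε hxz]
  have hmaps := mapsTo_smul_tr_stiffPart hε hz hD0
  filter_upwards [((quasiMeasurePreserving_smul_tr hε).restrict hmaps).ae hv0] with y hy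
  rw [indicator_apply_eq_zero]
  exact fun _ => hy

theorem aFreeTorus_unfold (hv : AFreeOn A Ω v) (hε : ε ≠ 0)
    (hD0 : closure D0 ⊆ Qcube d)
    (hv0 : ∀ᵐ x ∂volume.restrict (stiffPart ε Ω D0), v x = 0) (hx : x ∈ hatOmega ε Ω) :
    AFreeTorus A (unfold ε Ω v x) := by
  have hzero : ∀ᵐ y ∂volume.restrict (Qcube d \ closure D0), unfold ε Ω v x y = 0 :=
    ae_restrict_of_ae_restrict_of_subset (sdiff_subset_sdiff_right subset_closure)
      (ae_unfold_eq_zero hε (subset_closure.trans hD0) hv0 hx)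
  have hcompact : IsCompact (closure D0) :=
    isCompact_of_isClosed_isBounded isClosed_closure (isBounded_Qcube.subset hD0)
  exact fun ψ hψ _ => (aFreeOn_unfold hv hε hx).setIntegral_eq_zero_of_ae_eq_zero_off_compact
    isOpen_Qcube hcompact hD0 hzero hψ

theorem unfolding_A_free_general (hD0 : closure D0 ⊆ Qcube d) (_hv : LocallyIntegrableOn v Ω)
    (hfree : AFreeOn A Ω v) :
    (∀ ε : ℝ, ε ≠ 0 → ∀ x ∈ hatOmega ε Ω, AFreeOn A (Qcube d) (unfold ε Ω v x)) ∧
    (∀ ε : ℝ, ε ≠ 0 → (∀ᵐ x ∂volume.restrict (stiffPart ε Ω D0), v x = 0) →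
      ∀ x ∈ hatOmega ε Ω, AFreeTorus A (unfold ε Ω v x)) :=
  ⟨fun _ hε _ hx => aFreeOn_unfold hfree hε hx,
    fun _ hε hv0 _ hx => aFreeTorus_unfold hfree hε hD0 hv0 hx⟩

end Unfold

/-- the unfolding of an `𝒜`-free map is `𝒜`-free in the fast variable. -/
theorem unfolding_A_free
    {d N M : ℕ} (p a lam Lam mu : ℝ) (hp : 1 < p)
    (Ω D0 : Set (Rd d)) (hset : GoodSetting d Ω D0)
    (A : Fin d → (Vec N →ₗ[ℝ] Vec M))
    (v : Rd d → Vec N) (hv : MemLpOn p Ω v) (hfree : AFreeOn A Ω v) :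
    (∀ ε : ℝ, 0 < ε →
      ∀ᵐ x ∂volume.restrict (hatOmega ε Ω),
        AFreeOn A (Qcube d) (fun y => unfold ε Ω v x y)) ∧
    (∀ ε : ℝ, 0 < ε →
      (∀ᵐ x ∂volume.restrict (stiffPart ε Ω D0), v x = 0) →
      ∀ᵐ x ∂volume.restrict (hatOmega ε Ω),
        AFreeTorus A (fun y => unfold ε Ω v x y)) := by
  obtain ⟨-, -, -, -, -, -, -, -, -, hD0⟩ := hset
  have hloc : LocallyIntegrableOn v Ω := locallyIntegrableOn_of_locallyIntegrable_restrict
    (hv.locallyIntegrable (ENNReal.one_le_ofReal.2 hp.le))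
  obtain ⟨hQ, hT⟩ := unfolding_A_free_general hD0 hloc hfree
  exact ⟨fun ε hε => ae_restrict_of_forall_mem (isOpen_hatOmega hε.ne').measurableSet (hQ ε hε.ne'),
    fun ε hε hv0 => ae_restrict_of_forall_mem (isOpen_hatOmega hε.ne').measurableSet
      (hT ε hε.ne' hv0)⟩

end HC
end
end
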